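/- arXiv:math/9811006 — 9 statements merged into one kernel-verified Lean document; each statement's English description precedes it below -/
import Mathlib

section
/- Let α, β ∈ ℚ with 0 < β < α < 1/2 and suppose tan(πα) = λ·tan(πβ) for some rational number λ. Then α = 1/3, β = 1/6 and λ = 3. -/
/-!
Put `x = α + β`, `y = α - β` and `μ = (λ + 1) / (λ - 1) > 1`. The addition formulas turn
`tan (πα) = λ tan (πβ)` into `sin (πx) = μ sin (πy)`, so it suffices to find the rational ratios of
sines at rational multiples of `π` (`sin_ratio`). Squaring gives, for the reduced fractions
`x = a / b` and `y = c / d`, the relation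

  `1 - cos (2πa/b) = B (1 - cos (2πc/d))`, with `B = μ² > 1` rational.

The relation is over `ℚ`, so it is preserved by the Galois group of a cyclotomic field: `a` and `c`
may be replaced by `ua` and `vc` for any `u` prime to `b` and `v` prime to `d` that agree modulo
`g = gcd (b, d)` (`ratCos_conj_pair`). Two consequences decide everything.

* Fixing one side and moving the other, a unit modulo `b` that is `1` modulo `g` must be `±1`
  modulo `b`, and likewise for `d`. If `g ≤ 2` this puts `b` and `d` in `{2, 3, 4, 6}`; if `g ≥ 3`
  it leaves `b, d ∈ {g, 2g}`, with `g` odd wherever `2g` occurs.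
* Conjugates can be chosen at which one of the two sides is extremal. If `d ∣ b`, taking the left
  side minimal forces `B ≤ 1` (`false_of_dvd`). If `d = 2b` with `b ≥ 5` odd, taking the right side
  first minimal and then nearly maximal gives incompatible bounds on `B` (`false_of_two_mul`).

The remaining pairs have `b, d ∈ {2, 3, 4, 6}`, where all cosines are rational, and `B` is a
rational square larger than `1` only for `b = 2`, `d = 6`, that is `x = 1/2`, `y = 1/6`.
-/

/-! ### Cosines of rational multiples of `2π` -/

/-- The real number `cos (2πj/n)`, the real part of the `j`-th power of `exp (2πi/n)`. -/
noncomputable def ratCos (n : ℕ) (j : ℤ) : ℝ := Real.cos (2 * Real.pi * j / n)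

theorem ratCos_eq_iff {n : ℕ} (hn : 0 < n) (i j : ℤ) :
    ratCos n i = ratCos n j ↔ (n : ℤ) ∣ i - j ∨ (n : ℤ) ∣ i + j := by
  have hn' : (n : ℝ) ≠ 0 := by positivity
  have hpi := Real.pi_ne_zero
  unfold ratCos
  rw [Real.cos_eq_cos_iff]
  constructor
  · rintro ⟨k, h | h⟩
    · left
      refine ⟨-k, ?_⟩
      have : (j : ℝ) = n * k + i := by
        field_simp at h
        linarith
      have : j = n * k + i := by exact_mod_cast this
      linarith
    · right
      refine ⟨k, ?_⟩
      have : (j : ℝ) = n * k - i := by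
        field_simp at h
        linarith
      have : j = n * k - i := by exact_mod_cast this
      linarith
  · rintro (⟨k, h⟩ | ⟨k, h⟩)
    · refine ⟨-k, Or.inl ?_⟩
      have : (i : ℝ) - j = n * k := by exact_mod_cast h
      have : (j : ℝ) = i - n * k := by linarith
      rw [this]; push_cast; field_simp; ring
    · refine ⟨k, Or.inr ?_⟩
      have : (i : ℝ) + j = n * k := by exact_mod_cast h
      have : (j : ℝ) = n * k - i := by linarith
      rw [this]; field_simp

theorem ratCos_congr {n : ℕ} (hn : 0 < n) {i j : ℤ} (h : (n : ℤ) ∣ i - j) :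
    ratCos n i = ratCos n j := (ratCos_eq_iff hn i j).2 (Or.inl h)

theorem ratCos_mul_left {n m : ℕ} (hm : 0 < m) (j : ℤ) :
    ratCos (n * m) (j * m) = ratCos n j := by
  have : (m : ℝ) ≠ 0 := by positivity
  unfold ratCos
  congr 1
  push_cast
  rw [← mul_assoc, mul_div_mul_right _ _ this]

/-- Among the angles `2πj/n` that are not multiples of `2π`, the cosine is largest at `j = 1`. -/
theorem ratCos_le_ratCos_one {n : ℕ} (hn : 2 ≤ n) {j : ℤ} (hj : ¬ (n : ℤ) ∣ j) :
    ratCos n j ≤ ratCos n 1 := by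
  have hn0 : (0 : ℝ) < n := by positivity
  have hpi := Real.pi_pos
  have half (r : ℤ) (h1 : 1 ≤ r) (h2 : 2 * r ≤ n) : ratCos n r ≤ ratCos n 1 := by
    have h1' : (1 : ℝ) ≤ r := by exact_mod_cast h1
    have h2' : (2 * r : ℝ) ≤ n := by exact_mod_cast h2
    unfold ratCos
    apply Real.cos_le_cos_of_nonneg_of_le_pi
    · positivity
    · rw [div_le_iff₀ hn0]
      nlinarith
    · gcongr
  have hr0 : 0 ≤ j % n := Int.emod_nonneg _ (by omega)
  have hrn : j % n < n := Int.emod_lt_of_pos _ (by omega)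
  have hr1 : j % n ≠ 0 := fun h => hj (Int.dvd_of_emod_eq_zero h)
  rw [ratCos_congr (by omega) (i := j) (j := j % n) Int.dvd_self_sub_emod]
  by_cases h2 : 2 * (j % n) ≤ n
  · exact half _ (by omega) h2
  · have : ratCos n (j % n) = ratCos n (n - j % n) :=
      (ratCos_eq_iff (by omega) _ _).2 (Or.inr ⟨1, by ring⟩)
    rw [this]
    exact half _ (by omega) (by omega)

theorem ratCos_one_lt {n : ℕ} (hn : 2 ≤ n) : ratCos n 1 < 1 := by
  have hn0 : (0 : ℝ) < n := by positivity
  have h2 : (2 : ℝ) ≤ n := by exact_mod_cast hn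
  have hpi := Real.pi_pos
  rw [← Real.cos_zero]
  unfold ratCos
  apply Real.cos_lt_cos_of_nonneg_of_le_pi le_rfl
  · rw [div_le_iff₀ hn0]
    push_cast
    nlinarith
  · push_cast
    positivity

/-! ### Galois conjugation -/

/-- `2 cos (2πe/n) = ζ ^ e + ζ ^ (-e)` for `ζ = exp (2πi/n)`, with `ζ⁻¹` written as `ζ ^ (n - 1)` so
that only natural powers of `ζ` occur. -/
theorem ratCos_root {n : ℕ} (hn : 0 < n) (e : ℕ) :
    Complex.exp (2 * Real.pi * Complex.I / n) ^ e +
      Complex.exp (2 * Real.pi * Complex.I / n) ^ ((n - 1) * e) = 2 * (ratCos n e : ℂ) := by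
  have hζ := (Complex.isPrimitiveRoot_exp n hn.ne').pow_eq_one
  have hinv : Complex.exp (2 * Real.pi * Complex.I / n) ^ (n - 1) =
      Complex.exp (-(2 * Real.pi * Complex.I / n)) := by
    rw [Complex.exp_neg]
    apply eq_inv_of_mul_eq_one_left
    rw [← pow_succ, Nat.sub_add_cancel hn, hζ]
  rw [pow_mul, hinv, ← Complex.exp_nat_mul, ← Complex.exp_nat_mul]
  unfold ratCos
  push_cast
  rw [Complex.cos]
  have h1 : (e : ℂ) * (2 * Real.pi * Complex.I / n) = 2 * Real.pi * e / n * Complex.I := by ring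
  have h2 : (e : ℂ) * -(2 * Real.pi * Complex.I / n) = -(2 * Real.pi * e / n) * Complex.I := by
    ring
  rw [h1, h2]
  ring

open Polynomial in
/-- The relation says that a rational polynomial vanishes at `ζ = exp (2πi/n)`. It is then divisible
by the `n`-th cyclotomic polynomial, hence vanishes at the conjugate `ζ ^ k` as well. -/
theorem ratCos_conj_nat {n : ℕ} (hn : 0 < n) (e f k : ℕ) (hk : k.Coprime n) (B : ℚ)
    (h : 1 - ratCos n e = B * (1 - ratCos n f)) :
    1 - ratCos n (k * e : ℕ) = B * (1 - ratCos n (k * f : ℕ)) := by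
  set ζ := Complex.exp (2 * Real.pi * Complex.I / n) with hζdef
  have hζ : IsPrimitiveRoot ζ n := Complex.isPrimitiveRoot_exp n hn.ne'
  let P : ℚ[X] := C 2 - (X ^ e + X ^ ((n - 1) * e)) - C B * (C 2 - (X ^ f + X ^ ((n - 1) * f)))
  have hP : aeval ζ P = 0 := by
    simp only [P, map_sub, map_add, map_mul, map_pow, aeval_X, aeval_C, hζdef, ratCos_root hn]
    have : (1 : ℂ) - ratCos n e = B * (1 - ratCos n f) := by exact_mod_cast h
    simp only [eq_ratCast]
    push_cast
    linear_combination 2 * this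
  have hdvd : cyclotomic n ℚ ∣ P := by
    rw [cyclotomic_eq_minpoly_rat hζ hn]
    exact minpoly.dvd ℚ ζ hP
  have hk' : aeval (ζ ^ k) P = 0 := by
    have h0 : aeval (ζ ^ k) (cyclotomic n ℚ) = 0 := by
      rw [aeval_def, eval₂_eq_eval_map, map_cyclotomic]
      exact (hζ.pow_of_coprime k hk).isRoot_cyclotomic hn
    obtain ⟨Q, hQ⟩ := hdvd
    rw [hQ, map_mul, h0, zero_mul]
  simp only [P, map_sub, map_add, map_mul, map_pow, aeval_X, aeval_C, ← pow_mul] at hk'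
  rw [mul_left_comm k, mul_left_comm k, hζdef, ratCos_root hn, ratCos_root hn] at hk'
  simp only [eq_ratCast] at hk'
  push_cast at hk'
  have : (1 : ℂ) - ratCos n (k * e : ℕ) = B * (1 - ratCos n (k * f : ℕ)) := by
    push_cast
    linear_combination hk' / 2
  exact_mod_cast this

theorem ratCos_conj {n : ℕ} (hn : 0 < n) (e f k : ℤ) (hk : IsCoprime k n) (B : ℚ)
    (h : 1 - ratCos n e = B * (1 - ratCos n f)) :
    1 - ratCos n (k * e) = B * (1 - ratCos n (k * f)) := by
  have hn' : (n : ℤ) ≠ 0 := by positivity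
  have red (j : ℤ) : ∃ m : ℕ, (n : ℤ) ∣ j - m :=
    ⟨(j % n).toNat, by
      rw [Int.toNat_of_nonneg (Int.emod_nonneg _ hn')]
      exact Int.dvd_self_sub_emod⟩
  obtain ⟨e', he⟩ := red e
  obtain ⟨f', hf⟩ := red f
  obtain ⟨k', hk'⟩ := red k
  have hcop : k'.Coprime n := by
    rw [← Nat.isCoprime_iff_coprime]
    obtain ⟨t, ht⟩ := hk'
    have : (k' : ℤ) = k + n * (-t) := by linarith
    rw [this]
    exact hk.add_mul_left_left _
  have key (j : ℤ) (j' : ℕ) (hj : (n : ℤ) ∣ j - j') :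
      ratCos n (k * j) = ratCos n (k' * j' : ℕ) := by
    apply ratCos_congr hn
    have : k * j - (k' * j' : ℕ) = (k - k') * j + k' * (j - j') := by push_cast; ring
    rw [this]
    exact dvd_add (hk'.mul_right _) (hj.mul_left _)
  rw [ratCos_congr hn he, ratCos_congr hn hf] at h
  rw [key e e' he, key f f' hf]
  exact ratCos_conj_nat hn e' f' k' hcop B h

/-- Conjugation of a relation between two different denominators. By the Chinese remainder theorem,
units modulo `b` and `d` come from a common unit modulo `b * d` as soon as they agree modulo
`gcd b d`. -/
theorem ratCos_conj_pair {b d : ℕ} (hb : 0 < b) (hd : 0 < d) (a c : ℤ) (B : ℚ)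
    (h : 1 - ratCos b a = B * (1 - ratCos d c)) (u v : ℤ) (hu : IsCoprime u b)
    (hv : IsCoprime v d) (huv : (Nat.gcd b d : ℤ) ∣ u - v) :
    1 - ratCos b (u * a) = B * (1 - ratCos d (v * c)) := by
  obtain ⟨t, ht⟩ := huv
  have hbez := Nat.gcd_eq_gcd_ab b d
  set x := Nat.gcdA b d
  set y := Nat.gcdB b d
  -- Bezout's identity gives the simultaneous lift of `u` and `v`.
  obtain ⟨k, hkb, hkd⟩ : ∃ k : ℤ, k = u + b * (-(x * t)) ∧ k = v + d * (y * t) := by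
    refine ⟨_, rfl, ?_⟩
    rw [hbez] at ht
    linear_combination ht
  have hk : IsCoprime k ((b * d : ℕ) : ℤ) := by
    push_cast
    apply IsCoprime.mul_right
    · rw [hkb]; exact hu.add_mul_left_left _
    · rw [hkd]; exact hv.add_mul_left_left _
  have hA (j : ℤ) : ratCos (b * d) (j * d) = ratCos b j := ratCos_mul_left hd j
  have hC (j : ℤ) : ratCos (b * d) (j * b) = ratCos d j := by
    rw [mul_comm b d]; exact ratCos_mul_left hb j
  rw [← hA, ← hC] at h
  have := ratCos_conj (Nat.mul_pos hb hd) _ _ k hk B h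
  rw [← mul_assoc, ← mul_assoc, hA, hC] at this
  rw [ratCos_congr hb (i := u * a) (j := k * a), ratCos_congr hd (i := v * c) (j := k * c), this]
  · exact ⟨-(y * t) * c, by rw [hkd]; ring⟩
  · exact ⟨(x * t) * a, by rw [hkb]; ring⟩

/-! ### Moduli with few units congruent to `1` modulo a divisor -/

/-- For `g ≥ 3`, the classes `1` and `-1` differ modulo `g`, so the hypothesis says that the map
`(ℤ/b)ˣ → (ℤ/g)ˣ` is injective. It is always surjective, whence `φ(b) = φ(g)`. -/
theorem eq_or_eq_two_mul_of_kernel {b g : ℕ} (hb : 0 < b) (hgb : g ∣ b) (hg : 3 ≤ g)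
    (hker : ∀ u : ℤ, IsCoprime u b → (g : ℤ) ∣ u - 1 → (b : ℤ) ∣ u - 1 ∨ (b : ℤ) ∣ u + 1) :
    b = g ∨ (b = 2 * g ∧ Odd g) := by
  have hgb' : (g : ℤ) ∣ b := by exact_mod_cast hgb
  have : NeZero b := ⟨hb.ne'⟩
  have : NeZero g := ⟨by omega⟩
  have hinj : Function.Injective (ZMod.unitsMap hgb) := by
    rw [injective_iff_map_eq_one]
    intro w hw
    have hcop : IsCoprime ((w : ZMod b).val : ℤ) b := by
      rw [Nat.isCoprime_iff_coprime]
      exact ZMod.val_coe_unit_coprime w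
    have hg1 : (g : ℤ) ∣ ((w : ZMod b).val : ℤ) - 1 := by
      rw [← ZMod.intCast_zmod_eq_zero_iff_dvd]
      have h1 : ((ZMod.unitsMap hgb w : (ZMod g)ˣ) : ZMod g) = 1 := by rw [hw]; rfl
      rw [ZMod.unitsMap_val] at h1
      push_cast
      rw [ZMod.natCast_val, h1, sub_self]
    have hb1 : (b : ℤ) ∣ ((w : ZMod b).val : ℤ) - 1 := by
      refine (hker _ hcop hg1).resolve_right fun h => ?_
      have h2 : (g : ℤ) ∣ 2 := by
        have := dvd_sub (hgb'.trans h) hg1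
        ring_nf at this
        exact this
      have := Int.le_of_dvd (by norm_num) h2
      omega
    rw [← ZMod.intCast_zmod_eq_zero_iff_dvd] at hb1
    push_cast at hb1
    rw [ZMod.natCast_val, ZMod.cast_id] at hb1
    ext
    simpa [sub_eq_zero] using hb1
  have hcard : g.totient = b.totient := by
    rw [← ZMod.card_units_eq_totient, ← ZMod.card_units_eq_totient]
    exact (Fintype.card_of_bijective ⟨hinj, ZMod.unitsMap_surjective hgb⟩).symm
  rcases Nat.eq_or_eq_of_totient_eq_totient hgb hcard with h | h
  · exact Or.inl h.symm
  · refine Or.inr ⟨h.symm, ?_⟩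
    by_contra hodd
    rw [Nat.not_odd_iff_even] at hodd
    obtain ⟨m, rfl⟩ := hodd
    subst h
    -- If `g = 2m` and `b = 4m`, the unit `g + 1` modulo `b` violates the hypothesis.
    have hcop : IsCoprime (2 * m + 1 : ℤ) ((2 * (m + m) : ℕ) : ℤ) :=
      ⟨1 - 2 * m, m, by push_cast; ring⟩
    rcases hker _ hcop ⟨1, by push_cast; ring⟩ with h | h
    · have := Int.le_of_dvd (by omega) h
      push_cast at this
      omega
    · have := Int.le_of_dvd (by omega) h
      push_cast at this
      omega

/-- For `g ≤ 2`, every unit modulo `b` is `±1`. The unit tested is `b/2 + 1` if `4 ∣ b`, `b/2 + 2`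
if `b ≡ 2` modulo `4`, and `2` if `b` is odd. -/
theorem mem_of_kernel {b g : ℕ} (hb : 2 ≤ b) (hgb : g ∣ b) (hg : g ≤ 2)
    (hker : ∀ u : ℤ, IsCoprime u b → (g : ℤ) ∣ u - 1 → (b : ℤ) ∣ u - 1 ∨ (b : ℤ) ∣ u + 1) :
    b = 2 ∨ b = 3 ∨ b = 4 ∨ b = 6 := by
  have hg0 : 0 < g := Nat.pos_of_dvd_of_pos hgb (by omega)
  rcases Nat.even_or_odd' b with ⟨m, rfl | rfl⟩
  · have hodd (r : ℤ) : (g : ℤ) ∣ (2 * r + 1) - 1 := by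
      interval_cases g
      · simp
      · exact ⟨r, by push_cast; ring⟩
    rcases Nat.even_or_odd' m with ⟨r, rfl | rfl⟩
    · have hcop : IsCoprime (2 * r + 1 : ℤ) ((2 * (2 * r) : ℕ) : ℤ) :=
        ⟨1 - 2 * r, r, by push_cast; ring⟩
      rcases hker _ hcop (hodd r) with h | h
      · have := Int.le_of_dvd (by omega) h
        push_cast at this
        omega
      · have := Int.le_of_dvd (by omega) h
        push_cast at this
        omega
    · have hcop : IsCoprime (2 * (r + 1) + 1 : ℤ) ((2 * (2 * r + 1) : ℕ) : ℤ) := by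
        push_cast
        apply IsCoprime.mul_right
        · exact ⟨1, -(r + 1), by ring⟩
        · exact ⟨-r, (r + 1), by ring⟩
      rcases hker _ hcop (hodd _) with h | h
      · have := Int.le_of_dvd (by omega) h
        push_cast at this
        omega
      · have := Int.le_of_dvd (by omega) h
        push_cast at this
        omega
  · have hg1 : g = 1 := by
      interval_cases g
      · rfl
      · omega
    subst hg1
    have hcop : IsCoprime (2 : ℤ) ((2 * m + 1 : ℕ) : ℤ) := ⟨-m, 1, by push_cast; ring⟩
    rcases hker _ hcop (by simp) with h | h
    · have := Int.le_of_dvd (by omega) h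
      push_cast at this
      omega
    · have := Int.le_of_dvd (by omega) h
      push_cast at this
      omega

/-! ### The possible pairs of denominators -/

theorem not_dvd_of_isCoprime {n : ℕ} (hn : 2 ≤ n) {j : ℤ} (hj : IsCoprime j n) :
    ¬ (n : ℤ) ∣ j := by
  intro h
  have := Int.isUnit_iff.1 (hj.isUnit_of_dvd' h dvd_rfl)
  omega

theorem exists_inv {n : ℕ} {a : ℤ} (ha : IsCoprime a n) :
    ∃ u : ℤ, IsCoprime u n ∧ (n : ℤ) ∣ u * a - 1 := by
  obtain ⟨x, y, h⟩ := ha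
  exact ⟨x, ⟨a, y, by linarith⟩, -y, by linarith⟩

/-- The only units modulo `2`, `3`, `4` and `6` are `±1`. -/
theorem ratCos_small {n : ℕ} (hn : n = 2 ∨ n = 3 ∨ n = 4 ∨ n = 6) {a : ℤ}
    (ha : IsCoprime a n) : ratCos n a = ratCos n 1 := by
  rw [ratCos_eq_iff (by omega)]
  have hp (p : ℕ) (hp : 2 ≤ p) (hpn : p ∣ n) : ¬ (p : ℤ) ∣ a := fun h =>
    not_dvd_of_isCoprime hp (ha.of_isCoprime_of_dvd_right (by exact_mod_cast hpn)) h
  rcases hn with rfl | rfl | rfl | rfl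
  · have := hp 2 (by norm_num) (by norm_num)
    omega
  · have := hp 3 (by norm_num) (by norm_num)
    omega
  · have := hp 2 (by norm_num) (by norm_num)
    omega
  · have := hp 2 (by norm_num) (by norm_num)
    have := hp 3 (by norm_num) (by norm_num)
    have : a % 6 = 1 ∨ a % 6 = 5 := by omega
    omega

theorem ratCos_two : ratCos 2 1 = -1 := by
  unfold ratCos
  rw [← Real.cos_pi]; congr 1; push_cast; ring

theorem ratCos_three : ratCos 3 1 = -(1 / 2) := by
  unfold ratCos
  rw [← Real.cos_pi_div_three, ← Real.cos_pi_sub]; congr 1; push_cast; ring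

theorem ratCos_four : ratCos 4 1 = 0 := by
  unfold ratCos
  rw [← Real.cos_pi_div_two]; congr 1; push_cast; ring

theorem ratCos_six : ratCos 6 1 = 1 / 2 := by
  unfold ratCos
  rw [← Real.cos_pi_div_three]; congr 1; push_cast; ring

/-- The ratios of two of the numbers `2, 3/2, 1, 1/2` that exceed `1` are `4/3`, `3/2`, `2`, `3`
and `4`, and only `4` is the square of a rational. -/
theorem small_case {b d : ℕ} (hb : b = 2 ∨ b = 3 ∨ b = 4 ∨ b = 6)
    (hd : d = 2 ∨ d = 3 ∨ d = 4 ∨ d = 6) (μ : ℚ) (hμ : 1 < μ)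
    (h : 1 - ratCos b 1 = (μ ^ 2 : ℚ) * (1 - ratCos d 1)) : b = 2 ∧ d = 6 := by
  have h1 : (1 : ℝ) < (μ ^ 2 : ℚ) := by
    have : 1 < μ ^ 2 := by nlinarith
    exact_mod_cast this
  have no (q : ℚ) (hq : ¬ IsSquare q) : ((μ ^ 2 : ℚ) : ℝ) ≠ q := fun h =>
    hq ⟨μ, by rw [← sq]; exact_mod_cast h.symm⟩
  have n2 := no 2 (by norm_num)
  have n3 := no 3 (by norm_num)
  have n32 := no (3 / 2) (by norm_num)
  have n43 := no (4 / 3) (by norm_num)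
  generalize ((μ ^ 2 : ℚ) : ℝ) = q at *
  push_cast at n2 n3 n32 n43
  rcases hb with rfl | rfl | rfl | rfl <;> rcases hd with rfl | rfl | rfl | rfl <;>
    simp only [ratCos_two, ratCos_three, ratCos_four, ratCos_six] at h <;>
    first
    | exact ⟨rfl, rfl⟩
    | exact absurd (by linarith) n2
    | exact absurd (by linarith) n3
    | exact absurd (by linarith) n32
    | exact absurd (by linarith) n43

/-- After conjugation the left side is its least value `1 - cos (2π/b)`. The right side is at least
`B (1 - cos (2π/d))`, which is larger than that because `d ≤ b` and `B > 1`. -/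
theorem false_of_dvd {b d : ℕ} (hb : 2 ≤ b) (hd : 2 ≤ d) (hdb : d ∣ b) (a c : ℤ)
    (ha : IsCoprime a b) (hc : IsCoprime c d) (B : ℚ) (hB : 1 < B)
    (h : 1 - ratCos b a = B * (1 - ratCos d c)) : False := by
  obtain ⟨u, hu, hua⟩ := exists_inv ha
  have hud : IsCoprime u d := hu.of_isCoprime_of_dvd_right (by exact_mod_cast hdb)
  have h1 := ratCos_conj_pair (by omega) (by omega) a c B h u u hu hud (by simp)
  rw [ratCos_congr (by omega) hua] at h1
  have h2 := ratCos_le_ratCos_one hd (not_dvd_of_isCoprime hd (hud.mul_left hc))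
  have h3 : ratCos d 1 ≤ ratCos b 1 := by
    obtain ⟨m, rfl⟩ := hdb
    have hm : 0 < m := Nat.pos_of_ne_zero (by rintro rfl; omega)
    rw [← ratCos_mul_left hm 1]
    refine ratCos_le_ratCos_one hb fun hdvd => ?_
    have := Int.le_of_dvd (by omega) hdvd
    push_cast at this
    nlinarith
  have h4 := ratCos_one_lt hb
  have hB' : (1 : ℝ) < B := by exact_mod_cast hB
  nlinarith

/-- Let `t = cos (π/g)`. Conjugating `c` to `1` gives `2 (1 - t²) ≤ B (1 - t)`, that is
`B ≥ 2 (1 + t)`. Conjugating `c` to `g - 2`, which is prime to `2g` since `g` is odd, gives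
`2 B t² ≤ 2`. These are incompatible once `t² ≥ 1/2`. -/
theorem false_of_two_mul {g : ℕ} (hg : 5 ≤ g) (hodd : Odd g) (a c : ℤ)
    (ha : IsCoprime a g) (hc : IsCoprime c (2 * g : ℕ)) (B : ℚ)
    (h : 1 - ratCos g a = B * (1 - ratCos (2 * g) c)) : False := by
  have hg0 : (0 : ℝ) < g := by positivity
  have hpi := Real.pi_pos
  obtain ⟨u, hu, huc⟩ := exists_inv hc
  have hsub {v : ℤ} (hv : IsCoprime v (2 * g : ℕ)) : IsCoprime v g :=
    hv.of_isCoprime_of_dvd_right ⟨2, by push_cast; ring⟩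
  have h1 := ratCos_conj_pair (by omega) (by omega) a c B h u u (hsub hu) hu (by simp)
  have hw : IsCoprime (g - 2 : ℤ) (2 * g : ℕ) := by
    obtain ⟨m, rfl⟩ := hodd
    push_cast
    apply IsCoprime.mul_right
    · exact ⟨1, 1 - m, by ring⟩
    · exact ⟨m, 1 - m, by ring⟩
  have hv : IsCoprime ((g - 2) * u) (2 * g : ℕ) := hw.mul_left hu
  have h2 := ratCos_conj_pair (by omega) (by omega) a c B h _ _ (hsub hv) hv (by simp)
  rw [ratCos_congr (by omega) huc] at h1
  rw [ratCos_congr (by omega) (i := (g - 2) * u * c) (j := g - 2)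
    (by obtain ⟨t, ht⟩ := huc; exact ⟨(g - 2) * t, by linear_combination (g - 2 : ℤ) * ht⟩)] at h2
  have h3 := ratCos_le_ratCos_one (by omega) (not_dvd_of_isCoprime (by omega) ((hsub hu).mul_left ha))
  have h4 : -1 ≤ ratCos g ((g - 2) * u * a) := Real.neg_one_le_cos _
  set t := Real.cos (Real.pi / g) with ht
  have e1 : ratCos (2 * g) 1 = t := by
    unfold ratCos
    rw [ht]; congr 1; push_cast; field_simp
  have e2 : ratCos g 1 = 2 * t ^ 2 - 1 := by
    rw [ht, ← Real.cos_two_mul]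
    unfold ratCos
    congr 1; push_cast; ring
  have e3 : ratCos (2 * g) (g - 2) = 1 - 2 * t ^ 2 := by
    have : 1 - 2 * t ^ 2 = -(2 * t ^ 2 - 1) := by ring
    rw [this, ht, ← Real.cos_two_mul, ← Real.cos_pi_sub]
    unfold ratCos
    congr 1; push_cast; field_simp
  have t1 : √2 / 2 ≤ t := by
    rw [← Real.cos_pi_div_four]
    apply Real.cos_le_cos_of_nonneg_of_le_pi
    · positivity
    · linarith
    · gcongr
      have : (5 : ℝ) ≤ g := by exact_mod_cast hg
      linarith
  have t2 : t < 1 := e1 ▸ ratCos_one_lt (by omega)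
  have t0 : 0 < t := lt_of_lt_of_le (by positivity) t1
  have t3 : 1 / 2 ≤ t ^ 2 := by
    have h2 : √2 ^ 2 = 2 := Real.sq_sqrt (by norm_num)
    have : (√2 / 2) ^ 2 ≤ t ^ 2 := by gcongr
    linarith
  rw [e1] at h1
  rw [e3] at h2
  rw [e2] at h3
  have hB : 2 * (1 + t) ≤ B := by nlinarith
  nlinarith

/-- The relation `sin² (πa/b) = μ² sin² (πc/d)` between reduced fractions, with `μ > 1` rational,
determines the denominators. -/
theorem denominators {b d : ℕ} (hb : 2 ≤ b) (hd : 2 ≤ d) (a c : ℤ)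
    (ha : IsCoprime a b) (hc : IsCoprime c d) (μ : ℚ) (hμ : 1 < μ)
    (h : 1 - ratCos b a = (μ ^ 2 : ℚ) * (1 - ratCos d c)) : b = 2 ∧ d = 6 := by
  have hB : 1 < μ ^ 2 := by nlinarith
  have hB0 : ((μ ^ 2 : ℚ) : ℝ) ≠ 0 := by
    have : μ ^ 2 ≠ 0 := by positivity
    exact_mod_cast this
  have hb0 : 0 < b := by omega
  have hd0 : 0 < d := by omega
  have cancel {n : ℕ} (hn : 0 < n) {j u : ℤ} (hj : IsCoprime j n)
      (hu : ratCos n (u * j) = ratCos n j) : (n : ℤ) ∣ u - 1 ∨ (n : ℤ) ∣ u + 1 := by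
    rcases (ratCos_eq_iff hn _ _).1 hu with h | h
    · left
      apply hj.symm.dvd_of_dvd_mul_right
      rw [sub_mul, one_mul]
      exact h
    · right
      apply hj.symm.dvd_of_dvd_mul_right
      rw [add_mul, one_mul]
      exact h
  -- Moving only one side of the relation shows that the other side is fixed.
  have kerb : ∀ u : ℤ, IsCoprime u b → (Nat.gcd b d : ℤ) ∣ u - 1 →
      (b : ℤ) ∣ u - 1 ∨ (b : ℤ) ∣ u + 1 := by
    intro u hu hu1
    have := ratCos_conj_pair hb0 hd0 a c _ h u 1 hu isCoprime_one_left hu1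
    rw [one_mul] at this
    exact cancel hb0 ha (by linarith)
  have kerd : ∀ u : ℤ, IsCoprime u d → (Nat.gcd b d : ℤ) ∣ u - 1 →
      (d : ℤ) ∣ u - 1 ∨ (d : ℤ) ∣ u + 1 := by
    intro u hu hu1
    have := ratCos_conj_pair hb0 hd0 a c _ h 1 u isCoprime_one_left hu (by
      rw [← neg_sub, dvd_neg]; exact hu1)
    rw [one_mul, h] at this
    have := mul_left_cancel₀ hB0 this
    exact cancel hd0 hc (by linarith)
  have hgb := Nat.gcd_dvd_left b d
  have hgd := Nat.gcd_dvd_right b d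
  have small (hb' : b = 2 ∨ b = 3 ∨ b = 4 ∨ b = 6) (hd' : d = 2 ∨ d = 3 ∨ d = 4 ∨ d = 6) :
      b = 2 ∧ d = 6 := by
    rw [ratCos_small hb' ha, ratCos_small hd' hc] at h
    exact small_case hb' hd' μ hμ h
  rcases le_or_gt (Nat.gcd b d) 2 with hg | hg
  · exact small (mem_of_kernel hb hgb hg kerb) (mem_of_kernel hd hgd hg kerd)
  · rcases eq_or_eq_two_mul_of_kernel hd0 hgd hg kerd with h1 | ⟨h1, hodd⟩
    · exact (false_of_dvd hb hd (h1 ▸ hgb) a c ha hc _ hB h).elim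
    · rcases eq_or_eq_two_mul_of_kernel hb0 hgb hg kerb with h2 | ⟨h2, -⟩
      · rw [← h2] at h1 hodd hg
        subst h1
        by_cases hb5 : 5 ≤ b
        · exact (false_of_two_mul hb5 hodd a c ha hc _ h).elim
        · have : b = 3 := by
            obtain ⟨m, rfl⟩ := hodd
            omega
          exact small (by omega) (by omega)
      · exact (false_of_dvd hb hd (by rw [h2, ← h1]) a c ha hc _ hB h).elim

/-! ### Rational ratios of sines and tangents -/

theorem ratCos_rat (x : ℚ) : 1 - ratCos x.den x.num = 2 * Real.sin (Real.pi * x) ^ 2 := by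
  have : ratCos x.den x.num = Real.cos (2 * (Real.pi * x)) := by
    unfold ratCos
    congr 1
    rw [Rat.cast_def]
    ring
  rw [this, Real.cos_two_mul, Real.cos_sq']
  ring

theorem two_le_den {x : ℚ} (h0 : 0 < x) (h1 : x < 1) : 2 ≤ x.den := by
  have := x.den_pos
  by_contra hlt
  have hd : x.den = 1 := by omega
  have hx := (Rat.den_eq_one_iff x).1 hd
  rw [← hx] at h0 h1
  have h0' : 0 < x.num := by exact_mod_cast h0
  have h1' : x.num < 1 := by exact_mod_cast h1
  omega

theorem sin_ratio {x y μ : ℚ} (hy : 0 < y) (hyx : y < x) (hx : x < 1) (hy2 : y < 1 / 2)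
    (hμ : 1 < μ) (h : Real.sin (Real.pi * x) = μ * Real.sin (Real.pi * y)) :
    x = 1 / 2 ∧ y = 1 / 6 := by
  have hcop (q : ℚ) : IsCoprime q.num q.den := by
    rw [Int.isCoprime_iff_gcd_eq_one]
    exact q.reduced
  have h' : 1 - ratCos x.den x.num = (μ ^ 2 : ℚ) * (1 - ratCos y.den y.num) := by
    rw [ratCos_rat, ratCos_rat, h]
    push_cast
    ring
  obtain ⟨hb, hd⟩ := denominators (two_le_den (hy.trans hyx) hx) (two_le_den hy (hyx.trans hx))
    _ _ (hcop x) (hcop y) μ hμ h'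
  have hxe := Rat.num_div_den x
  have hye := Rat.num_div_den y
  rw [hb] at hxe
  rw [hd] at hye
  push_cast at hxe hye
  have hx0 : (0 : ℚ) < x.num := by linarith
  have hx1 : (x.num : ℚ) < 2 := by linarith
  have hy0 : (0 : ℚ) < y.num := by linarith
  have hy1 : (y.num : ℚ) < 3 := by linarith
  have hxn : x.num = 1 := by
    have : 0 < x.num := by exact_mod_cast hx0
    have : x.num < 2 := by exact_mod_cast hx1
    omega
  have hyn : y.num = 1 := by
    have h0 : 0 < y.num := by exact_mod_cast hy0
    have h3 : y.num < 3 := by exact_mod_cast hy1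
    have hc := hcop y
    rw [hd] at hc
    have := not_dvd_of_isCoprime (n := 2) le_rfl (hc.of_isCoprime_of_dvd_right (by norm_num))
    omega
  rw [hxn] at hxe
  rw [hyn] at hye
  constructor
  · rw [← hxe]; norm_num
  · rw [← hye]; norm_num

/-- If `α, β ∈ ℚ` with `0 < β < α < 1/2` satisfy `tan(πα) = λ·tan(πβ)` for some
rational `λ`, then `α = 1/3`, `β = 1/6` and `λ = 3`. -/
theorem tan_rational_ratio (α β lam : ℚ)
    (hβ : 0 < β) (hβα : β < α) (hα : α < 1 / 2)
    (h : Real.tan (Real.pi * (α : ℝ)) = (lam : ℝ) * Real.tan (Real.pi * (β : ℝ))) :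
    α = 1 / 3 ∧ β = 1 / 6 ∧ lam = 3 := by
  have hpi := Real.pi_pos
  have hβ' : (0 : ℝ) < β := by exact_mod_cast hβ
  have hβα' : (β : ℝ) < α := by exact_mod_cast hβα
  have hα' : (α : ℝ) < 1 / 2 := by
    have : ((α : ℚ) : ℝ) < ((1 / 2 : ℚ) : ℝ) := by exact_mod_cast hα
    simpa using this
  have hB0 : 0 < Real.pi * β := by positivity
  have hBA : Real.pi * β < Real.pi * α := by gcongr
  have hA2 : Real.pi * α < Real.pi / 2 := by nlinarith
  have htβ : 0 < Real.tan (Real.pi * β) := Real.tan_pos_of_pos_of_lt_pi_div_two hB0 (hBA.trans hA2)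
  have htαβ : Real.tan (Real.pi * β) < Real.tan (Real.pi * α) :=
    Real.tan_lt_tan_of_nonneg_of_lt_pi_div_two hB0.le hA2 hBA
  have hlam' : (1 : ℝ) < lam := by
    by_contra hle
    nlinarith
  have hlam : 1 < lam := by exact_mod_cast hlam'
  have hcα : Real.cos (Real.pi * α) ≠ 0 :=
    (Real.cos_pos_of_mem_Ioo ⟨by linarith, hA2⟩).ne'
  have hcβ : Real.cos (Real.pi * β) ≠ 0 :=
    (Real.cos_pos_of_mem_Ioo ⟨by linarith, by linarith⟩).ne'
  have hsin : Real.sin (Real.pi * (α + β : ℚ)) =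
      ((lam + 1) / (lam - 1) : ℚ) * Real.sin (Real.pi * (α - β : ℚ)) := by
    have hl : (lam : ℝ) - 1 ≠ 0 := by linarith
    -- `sin (A + B) (λ - 1) = sin (A - B) (λ + 1)` is `sin A cos B = λ cos A sin B`.
    rw [Real.tan_eq_sin_div_cos, Real.tan_eq_sin_div_cos] at h
    field_simp at h
    push_cast
    rw [mul_add, mul_sub, Real.sin_add, Real.sin_sub]
    field_simp
    linear_combination (-2) * h
  obtain ⟨h1, h2⟩ := sin_ratio (by linarith) (by linarith) (by linarith) (by linarith)
    (by rw [lt_div_iff₀ (by linarith)]; linarith) hsin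
  have eα : α = 1 / 3 := by linarith
  have eβ : β = 1 / 6 := by linarith
  refine ⟨eα, eβ, ?_⟩
  subst eα eβ
  have a1 : Real.pi * ((1 / 3 : ℚ) : ℝ) = Real.pi / 3 := by push_cast; ring
  have a2 : Real.pi * ((1 / 6 : ℚ) : ℝ) = Real.pi / 6 := by push_cast; ring
  rw [a1, a2, Real.tan_pi_div_three, Real.tan_pi_div_six] at h
  have h3 : √3 * √3 = (3 : ℝ) := Real.mul_self_sqrt (by norm_num)
  have : (lam : ℝ) = 3 := by
    field_simp at h
    linarith
  exact_mod_cast this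
end

section
/- Let α, β ∈ ℚ with 0 < β < α < 1/2 and suppose tan(πα) = λ·tan(πβ) for some rational number λ. Then the subfields ℚ(e^{2πiα}) and ℚ(e^{2πiβ}) of ℂ are equal. -/
/-!
With `x = e^{2iθ}` and `t = i tan θ` one has `t = (x - 1) / (x + 1)` and `x = (1 + t) / (1 - t)`.
These Möbius transformations have rational coefficients, so `ℚ(e^{2iθ}) = ℚ(i tan θ)`
(`adjoin_exp_eq_adjoin_tan`). Taking `θ = πα` and `θ = πβ`, it remains to see that multiplying a
generator by `λ` does not change the field; this holds since `λ ≠ 0`, because `tan(πα) > 0`.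
-/

open IntermediateField

theorem adjoin_exp_eq_adjoin_tan (q : ℚ) (hc : Real.cos (Real.pi * (q : ℝ)) ≠ 0) :
    ℚ⟮Complex.exp (2 * Real.pi * Complex.I * (q : ℂ))⟯ =
      ℚ⟮Complex.I * ((Real.tan (Real.pi * (q : ℝ)) : ℝ) : ℂ)⟯ := by
  set x := Complex.exp (2 * Real.pi * Complex.I * (q : ℂ)) with hx
  set t := Complex.I * ((Real.tan (Real.pi * (q : ℝ)) : ℝ) : ℂ) with ht
  have hcC : Complex.cos (Real.pi * (q : ℂ)) ≠ 0 := by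
    have : ((Real.cos (Real.pi * (q : ℝ)) : ℝ) : ℂ) ≠ 0 := by exact_mod_cast hc
    simpa using this
  -- Write `x = u ^ 2` with `u = e^{iθ}`, so that `x + 1 = 2 u cos θ` and `x - 1 = 2 i u sin θ`.
  obtain ⟨u, hu⟩ : ∃ u, u = Complex.exp (Real.pi * (q : ℂ) * Complex.I) := ⟨_, rfl⟩
  have hu0 : u ≠ 0 := hu ▸ Complex.exp_ne_zero _
  have hxu : x = u ^ 2 := by
    rw [hx, hu, ← Complex.exp_nat_mul]
    congr 1
    push_cast
    ring
  have hucs : u = Complex.cos (Real.pi * (q : ℂ)) + Complex.sin (Real.pi * (q : ℂ)) * Complex.I :=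
    hu.trans (Complex.exp_mul_I _)
  have hsq := Complex.sin_sq_add_cos_sq (Real.pi * (q : ℂ))
  have htt : t * Complex.cos (Real.pi * (q : ℂ)) =
      Complex.I * Complex.sin (Real.pi * (q : ℂ)) := by
    have : t = Complex.I * Complex.tan (Real.pi * (q : ℂ)) := by simp [ht]
    rw [this, mul_assoc, Complex.tan_mul_cos hcC]
  generalize Complex.cos (Real.pi * (q : ℂ)) = c at *
  generalize Complex.sin (Real.pi * (q : ℂ)) = s at *
  have hI := Complex.I_sq
  have hp : x + 1 = 2 * u * c := by
    rw [hxu, hucs]; linear_combination s ^ 2 * hI - hsq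
  have hm : x - 1 = 2 * u * (Complex.I * s) := by
    rw [hxu, hucs]; linear_combination hsq - s ^ 2 * hI
  have hx1 : x + 1 ≠ 0 := by
    rw [hp]; exact mul_ne_zero (mul_ne_zero two_ne_zero hu0) hcC
  have key : t * (x + 1) = x - 1 := by
    rw [hp, hm]; linear_combination 2 * u * htt
  have ht1 : 1 - t ≠ 0 := by
    intro h0
    have : (2 : ℂ) = 0 := by linear_combination key + (x + 1) * h0
    exact two_ne_zero this
  apply le_antisymm <;> rw [adjoin_simple_le_iff]
  · have e : x = (1 + t) / (1 - t) := by
      rw [eq_div_iff ht1]; linear_combination -key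
    have hmem := mem_adjoin_simple_self ℚ t
    rw [e]
    exact div_mem (add_mem (one_mem _) hmem) (sub_mem (one_mem _) hmem)
  · have e : t = (x - 1) / (x + 1) := by
      rw [eq_div_iff hx1]; exact key
    have hmem := mem_adjoin_simple_self ℚ x
    rw [e]
    exact div_mem (sub_mem hmem (one_mem _)) (add_mem hmem (one_mem _))

/-- If `α, β ∈ ℚ` with `0 < β < α < 1/2` satisfy `tan(πα) = λ·tan(πβ)` for some
rational `λ`, then the cyclotomic fields `ℚ(e^{2πiα})` and `ℚ(e^{2πiβ})` coincide. -/
theorem adjoin_exp_eq_of_tan_rational_ratio (α β lam : ℚ)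
    (hβ : 0 < β) (hβα : β < α) (hα : α < 1 / 2)
    (h : Real.tan (Real.pi * (α : ℝ)) = (lam : ℝ) * Real.tan (Real.pi * (β : ℝ))) :
    ℚ⟮Complex.exp (2 * Real.pi * Complex.I * (α : ℂ))⟯ =
      ℚ⟮Complex.exp (2 * Real.pi * Complex.I * (β : ℂ))⟯ := by
  have bounds : ∀ q : ℚ, 0 < q → q < 1 / 2 →
      0 < Real.pi * (q : ℝ) ∧ Real.pi * (q : ℝ) < Real.pi / 2 := by
    intro q h0 h1
    have h0' : (0 : ℝ) < q := by exact_mod_cast h0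
    have h1' : (q : ℝ) < 1 / 2 := by
      have : ((q : ℚ) : ℝ) < ((1 / 2 : ℚ) : ℝ) := by exact_mod_cast h1
      simpa using this
    have hpi := Real.pi_pos
    exact ⟨mul_pos hpi h0', by nlinarith⟩
  have hcos : ∀ q : ℚ, 0 < q → q < 1 / 2 → Real.cos (Real.pi * (q : ℝ)) ≠ 0 := by
    intro q h0 h1
    obtain ⟨a, b⟩ := bounds q h0 h1
    exact (Real.cos_pos_of_mem_Ioo ⟨by linarith, b⟩).ne'
  have hα0 : 0 < α := hβ.trans hβα
  have htan : 0 < Real.tan (Real.pi * (α : ℝ)) :=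
    Real.tan_pos_of_pos_of_lt_pi_div_two (bounds α hα0 hα).1 (bounds α hα0 hα).2
  have hlam : lam ≠ 0 := by
    rintro rfl
    simp [h] at htan
  rw [adjoin_exp_eq_adjoin_tan α (hcos α hα0 hα),
    adjoin_exp_eq_adjoin_tan β (hcos β hβ (hβα.trans hα)), h]
  have hlamC : (lam : ℂ) ≠ 0 := by exact_mod_cast hlam
  have hrat : ∀ K : IntermediateField ℚ ℂ, (lam : ℂ) ∈ K := fun K => K.algebraMap_mem lam
  generalize Real.tan (Real.pi * (β : ℝ)) = T
  apply le_antisymm <;> rw [adjoin_simple_le_iff]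
  · have e : Complex.I * (((lam : ℝ) * T : ℝ) : ℂ) = lam * (Complex.I * T) := by
      push_cast; ring
    rw [e]
    exact mul_mem (hrat _) (mem_adjoin_simple_self ℚ _)
  · have e : Complex.I * (T : ℂ) = (Complex.I * (((lam : ℝ) * T : ℝ) : ℂ)) / lam := by
      push_cast; field_simp
    rw [e]
    exact div_mem (mem_adjoin_simple_self ℚ _) (hrat _)
end

section
/- Let s, n be coprime positive integers with n ≥ 2s+1, and let b be an integer with 0 < b < s. Then the real number tan(πb/n)/tan(πs/n) is irrational. -/
/-!
Suppose `tan (πb/n) = r * tan (πs/n)` with `r` rational. With `ζ = exp (2πi/n)` this says that `ζ`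
is a root of `(X ^ b - 1) * (X ^ s + 1) - r * (X ^ s - 1) * (X ^ b + 1)`, a polynomial over `ℚ`
(`exp_relation`). All primitive `n`-th roots of unity have the same minimal polynomial over `ℚ`, so
the same relation holds at `ζ ^ j`, where `j` is the inverse of `s` modulo `n`
(`tan_relation_conj`). With `k = j * b mod n`, this conjugate relation reads
`sin (πk/n) * cos (π/n) = r * sin (π/n) * cos (πk/n)`. Since `0 < b < s < n/2`, one has `0 < r < 1`
and `0 < k < n`. But among the nonzero multiples of `π/n` modulo `π`, the tangent is smallest in
absolute value at `π/n`, so `r` cannot be smaller than `1` (`no_small_ratio`).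
-/

open Polynomial in
/-- A rational polynomial vanishing at one primitive `n`-th root of unity vanishes at all of
them. -/
lemma aeval_eq_zero_of_isPrimitiveRoot {n : ℕ} (hn : 0 < n) {ζ ω : ℂ} (hζ : IsPrimitiveRoot ζ n)
    (hω : IsPrimitiveRoot ω n) {P : ℚ[X]} (h : aeval ζ P = 0) : aeval ω P = 0 := by
  rw [← minpoly.dvd_iff] at h ⊢
  rwa [← Polynomial.cyclotomic_eq_minpoly_rat hω hn, Polynomial.cyclotomic_eq_minpoly_rat hζ hn]

/-- The relation `tan x = r * tan y`, cleared of denominators, as a polynomial relation between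
`exp (2ix)` and `exp (2iy)`. -/
lemma exp_relation (x y r : ℝ) :
    (Complex.exp (2 * x * Complex.I) - 1) * (Complex.exp (2 * y * Complex.I) + 1)
      - r * ((Complex.exp (2 * y * Complex.I) - 1) * (Complex.exp (2 * x * Complex.I) + 1)) = 0
    ↔ Real.sin x * Real.cos y = r * (Real.sin y * Real.cos x) := by
  have sub_one (z : ℝ) : Complex.exp (2 * z * Complex.I) - 1
      = 2 * Complex.I * Complex.exp (z * Complex.I) * Complex.sin z := by
    rw [show (2 * z * Complex.I : ℂ) = z * Complex.I + z * Complex.I by ring, Complex.exp_add,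
      Complex.exp_mul_I]
    linear_combination Complex.sin_sq_add_cos_sq (z : ℂ)
      - Complex.sin z ^ 2 * Complex.I_sq
  have add_one (z : ℝ) : Complex.exp (2 * z * Complex.I) + 1
      = 2 * Complex.exp (z * Complex.I) * Complex.cos z := by
    rw [show (2 * z * Complex.I : ℂ) = z * Complex.I + z * Complex.I by ring, Complex.exp_add,
      Complex.exp_mul_I]
    linear_combination -Complex.sin_sq_add_cos_sq (z : ℂ)
      + Complex.sin z ^ 2 * Complex.I_sq
  have factor : (Complex.exp (2 * x * Complex.I) - 1) * (Complex.exp (2 * y * Complex.I) + 1)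
      - r * ((Complex.exp (2 * y * Complex.I) - 1) * (Complex.exp (2 * x * Complex.I) + 1))
      = (4 * Complex.I * Complex.exp (x * Complex.I) * Complex.exp (y * Complex.I)) *
        ((Real.sin x * Real.cos y - r * (Real.sin y * Real.cos x) : ℝ) : ℂ) := by
    rw [sub_one, sub_one, add_one, add_one]
    push_cast
    ring
  rw [factor, mul_eq_zero, or_iff_right (by simp [Complex.exp_ne_zero]), Complex.ofReal_eq_zero,
    sub_eq_zero]

/-- Powers of the standard root of unity, in the shape used by `exp_relation`. -/
lemma zeta_pow (n m : ℕ) : Complex.exp (2 * Real.pi * Complex.I / n) ^ m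
    = Complex.exp (2 * (Real.pi * m / n : ℝ) * Complex.I) := by
  rw [← Complex.exp_nat_mul]
  congr 1
  push_cast
  ring

open Polynomial in
/-- A relation `tan (πb/n) = r * tan (πs/n)` with rational `r` is preserved by the Galois
conjugation `ζ ↦ ζ ^ j`; the exponents may afterwards be reduced modulo `n`. -/
lemma tan_relation_conj {s n b j t k : ℕ} (r : ℚ) (hn : 0 < n) (hj : j.Coprime n)
    (ht : j * s % n = t % n) (hk : j * b % n = k % n)
    (h : Real.sin (Real.pi * b / n) * Real.cos (Real.pi * s / n)
      = r * (Real.sin (Real.pi * s / n) * Real.cos (Real.pi * b / n))) :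
    Real.sin (Real.pi * k / n) * Real.cos (Real.pi * t / n)
      = r * (Real.sin (Real.pi * t / n) * Real.cos (Real.pi * k / n)) := by
  have hζ := Complex.isPrimitiveRoot_exp n hn.ne'
  have red {a c : ℕ} (hac : j * a % n = c % n) :
      (Complex.exp (2 * Real.pi * Complex.I / n) ^ j) ^ a
        = Complex.exp (2 * Real.pi * Complex.I / n) ^ c := by
    rw [← pow_mul, ← pow_mod_orderOf, ← pow_mod_orderOf _ c, ← hζ.eq_orderOf, hac]
  have key := aeval_eq_zero_of_isPrimitiveRoot hn hζ (hζ.pow_of_coprime j hj)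
    (P := (X ^ b - 1) * (X ^ s + 1) - C r * ((X ^ s - 1) * (X ^ b + 1))) (by
      rw [← exp_relation, ← zeta_pow, ← zeta_pow] at h
      simpa using h)
  rw [← exp_relation, ← zeta_pow, ← zeta_pow, ← red ht, ← red hk]
  simpa using key

/-- On `[π/n, π - π/n]` the absolute value of the tangent is at least `tan (π/n)`; the statement is
free of denominators, so that `k = n/2` needs no separate treatment. -/
lemma no_small_ratio {n k : ℕ} {r : ℝ} (hn : 3 ≤ n) (hk : 0 < k) (hkn : k < n) (hr : 0 < r)
    (hr1 : r < 1) : Real.sin (Real.pi * k / n) * Real.cos (Real.pi * (1 : ℕ) / n)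
      ≠ r * (Real.sin (Real.pi * (1 : ℕ) / n) * Real.cos (Real.pi * k / n)) := by
  intro h
  have hπ := Real.pi_pos
  have hn' : (3 : ℝ) ≤ n := by exact_mod_cast hn
  have hk' : (1 : ℝ) ≤ k := by exact_mod_cast hk
  have hkn' : (k : ℝ) + 1 ≤ n := by exact_mod_cast hkn
  have hn0 : (0 : ℝ) < n := by linarith
  rw [Nat.cast_one, mul_one] at h
  set α := Real.pi / n with hα
  set θ := Real.pi * k / n with hθ
  have hα0 : 0 < α := by positivity
  have hα2 : α < Real.pi / 2 := by
    rw [hα]; exact div_lt_div_of_pos_left hπ (by norm_num) (by linarith)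
  have hαθ : α ≤ θ := by rw [hα, hθ]; gcongr; nlinarith
  have hθα : θ ≤ Real.pi - α := by
    rw [hα, hθ, le_sub_iff_add_le, ← add_div, div_le_iff₀ hn0]; nlinarith
  have hsα : 0 < Real.sin α := Real.sin_pos_of_pos_of_lt_pi hα0 (by linarith)
  have hcα : 0 < Real.cos α := Real.cos_pos_of_mem_Ioo ⟨by linarith, hα2⟩
  have hsθ : 0 < Real.sin θ := Real.sin_pos_of_pos_of_lt_pi (by linarith) (by linarith)
  have hc1 : Real.cos θ ≤ Real.cos α :=
    Real.cos_le_cos_of_nonneg_of_le_pi hα0.le (by linarith) hαθ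
  have hc2 : -Real.cos α ≤ Real.cos θ := by
    rw [← Real.cos_pi_sub]
    exact Real.cos_le_cos_of_nonneg_of_le_pi (by linarith) (by linarith) hθα
  have hs : Real.sin α ≤ Real.sin θ := by
    refine le_of_sq_le_sq ?_ hsθ.le
    have := sq_le_sq' hc2 hc1
    nlinarith [Real.sin_sq_add_cos_sq α, Real.sin_sq_add_cos_sq θ]
  have h1 : Real.sin α * Real.cos α ≤ Real.sin θ * Real.cos α := by gcongr
  have h2 : r * (Real.sin α * Real.cos θ) ≤ r * (Real.sin α * Real.cos α) := by gcongr
  have h3 : 0 < Real.sin α * Real.cos α := by positivity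
  nlinarith

/-- Let `s, n` be coprime positive integers with `n ≥ 2s+1` and let `0 < b < s`.
Then `tan(πb/n)/tan(πs/n)` is irrational. -/
theorem tan_ratio_irrational (s n b : ℕ) (hs : 0 < s) (hn : 0 < n) (hb : 0 < b)
    (hcop : Nat.gcd s n = 1) (hns : n ≥ 2 * s + 1) (hbs : b < s) :
    Irrational (Real.tan (Real.pi * b / n) / Real.tan (Real.pi * s / n)) := by
  rintro ⟨r, hr⟩
  have hπ := Real.pi_pos
  have hn0 : (0 : ℝ) < n := by exact_mod_cast hn
  have hx0 : 0 < Real.pi * b / n := by positivity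
  have hxy : Real.pi * b / n < Real.pi * s / n := by gcongr
  have hy2 : Real.pi * s / n < Real.pi / 2 := by
    have : (2 * s + 1 : ℝ) ≤ n := by exact_mod_cast hns
    rw [div_lt_div_iff₀ hn0 two_pos]; nlinarith
  have htx := Real.tan_pos_of_pos_of_lt_pi_div_two hx0 (hxy.trans hy2)
  have htxy := Real.tan_lt_tan_of_nonneg_of_lt_pi_div_two hx0.le hy2 hxy
  have hcx : 0 < Real.cos (Real.pi * b / n) :=
    Real.cos_pos_of_mem_Ioo ⟨by linarith, by linarith⟩
  have hcy : 0 < Real.cos (Real.pi * s / n) :=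
    Real.cos_pos_of_mem_Ioo ⟨by linarith, by linarith⟩
  have hr0 : (0 : ℝ) < r := by rw [hr]; exact div_pos htx (htx.trans htxy)
  have hr1 : (r : ℝ) < 1 := by rw [hr]; exact (div_lt_one (htx.trans htxy)).2 htxy
  have hrel : Real.sin (Real.pi * b / n) * Real.cos (Real.pi * s / n)
      = r * (Real.sin (Real.pi * s / n) * Real.cos (Real.pi * b / n)) := by
    rw [eq_div_iff (htx.trans htxy).ne', Real.tan_eq_sin_div_cos, Real.tan_eq_sin_div_cos,
      mul_div_assoc', div_eq_div_iff hcy.ne' hcx.ne'] at hr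
    linarith
  -- The conjugation sending the angle `πs/n` to `π/n`.
  obtain ⟨j, -, hj⟩ := Nat.exists_mul_mod_eq_one_of_coprime (k := n) hcop (by omega)
  have hjs : j * s % n = 1 % n := by rw [mul_comm, hj, Nat.mod_eq_of_lt (by omega)]
  have hjn : j.Coprime n := by
    have : (j * s).Coprime n := by
      rw [Nat.Coprime, Nat.ModEq.gcd_eq hjs, Nat.gcd_one_left]
    exact this.coprime_mul_right
  have hk : 0 < j * b % n := by
    refine Nat.pos_of_ne_zero fun h0 ↦ ?_
    have := Nat.le_of_dvd hb (hjn.symm.dvd_of_dvd_mul_left (Nat.dvd_of_mod_eq_zero h0))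
    omega
  exact no_small_ratio (by omega) hk (Nat.mod_lt _ hn) hr0 hr1
    (tan_relation_conj r hn hjn hjs (Nat.mod_mod _ _).symm hrel)
end

section
/- Let g : ℝ → ℝ be the sawtooth function g(t) = 2·|t − ⌊t⌋ − 1/2|. Then for all real numbers x, y one has g(x) = g(y) if and only if x − y ∈ ℤ or x + y ∈ ℤ. -/
/-!
Equality of the values of `g` means that `x - ⌊x⌋ - 1/2` and `y - ⌊y⌋ - 1/2` agree up to sign
(`abs_eq_abs`); the sign `+` puts `x - y` in `ℤ`, the sign `-` puts `x + y` in `ℤ`. Conversely,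
`g` has period `1` because `⌊y + z⌋ = ⌊y⌋ + z`, and it is even because the fractional parts of
`y` and `-y` either both vanish or add up to `1`.
-/

/-- For the sawtooth function `g(t) = 2|t - ⌊t⌋ - 1/2|` one has
`g x = g y ↔ x - y ∈ ℤ ∨ x + y ∈ ℤ`. -/
theorem sawtooth_eq_iff (g : ℝ → ℝ)
    (hg : ∀ t : ℝ, g t = 2 * |t - (⌊t⌋ : ℝ) - 1 / 2|) :
    ∀ x y : ℝ, g x = g y ↔ (∃ z : ℤ, x - y = (z : ℝ)) ∨ (∃ z : ℤ, x + y = (z : ℝ)) := by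
  intro x y
  have key : g x = g y ↔ |x - (⌊x⌋ : ℝ) - 1 / 2| = |y - (⌊y⌋ : ℝ) - 1 / 2| := by
    rw [hg, hg]
    exact mul_right_inj' two_ne_zero
  rw [key, abs_eq_abs]
  constructor
  · rintro (h | h)
    · exact Or.inl ⟨⌊x⌋ - ⌊y⌋, by push_cast; linarith⟩
    · exact Or.inr ⟨⌊x⌋ + ⌊y⌋ + 1, by push_cast; linarith⟩
  · rintro (⟨z, hz⟩ | ⟨z, hz⟩)
    · left
      obtain rfl : x = y + z := by linarith
      rw [Int.floor_add_intCast]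
      push_cast
      ring
    · -- For integral `y` both fractional parts vanish; otherwise they add up to `1`.
      by_cases hy : y = ⌊y⌋
      · left
        have hx : x = ((z - ⌊y⌋ : ℤ) : ℝ) := by push_cast; linarith
        have hfx : (⌊x⌋ : ℝ) = x := by rw [hx, Int.floor_intCast]
        linarith
      · right
        have hlt : (⌊y⌋ : ℝ) < y := lt_of_le_of_ne (Int.floor_le y) (Ne.symm hy)
        have hfx : ⌊x⌋ = z - ⌊y⌋ - 1 := by
          rw [Int.floor_eq_iff]
          push_cast
          constructor <;> linarith [Int.lt_floor_add_one y]
        rw [hfx]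
        push_cast
        linarith
end

section
/- Let g : ℝ → ℝ be the sawtooth function g(t) = 2·|t − ⌊t⌋ − 1/2|, let m be a positive integer and let t₁, t₂, φ be real numbers. Then g(m·t₁ + φ) = g(m·t₂ + φ) if and only if m·(t₁ − t₂) ∈ ℤ or m·(t₁ + t₂) + 2φ ∈ ℤ. -/
/-!
Write `a, b ∈ [0, 1)` for the fractional parts of `x = m t₁ + φ` and `y = m t₂ + φ`. The heights at
`x` and `y` agree iff `|a - 1/2| = |b - 1/2|`, that is, iff `a = b` or `a + b = 1`. The first
condition says `x - y ∈ ℤ`. The integrality of `x + y` means `a + b ∈ {0, 1}`, and `a + b = 0`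
forces `a = b = 0`, so it also gives equal heights.
-/

theorem abs_sub_floor_sub_half_eq_iff (x y : ℝ) :
    |x - (⌊x⌋ : ℝ) - 1 / 2| = |y - (⌊y⌋ : ℝ) - 1 / 2| ↔
      (∃ z : ℤ, x - y = z) ∨ (∃ z : ℤ, x + y = z) := by
  have hx0 := Int.floor_le x
  have hx1 := Int.lt_floor_add_one x
  have hy0 := Int.floor_le y
  have hy1 := Int.lt_floor_add_one y
  rw [abs_eq_abs]
  constructor
  · rintro (h | h)
    · exact Or.inl ⟨⌊x⌋ - ⌊y⌋, by push_cast; linarith⟩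
    · exact Or.inr ⟨⌊x⌋ + ⌊y⌋ + 1, by push_cast; linarith⟩
  · rintro (⟨z, hz⟩ | ⟨z, hz⟩)
    · left
      obtain rfl : x = y + z := by linarith
      rw [Int.floor_add_intCast]
      push_cast
      ring
    · -- The sum of the fractional parts is the integer `z - ⌊x⌋ - ⌊y⌋`, which lies in `[0, 2)`.
      have h0 : ⌊x⌋ + ⌊y⌋ ≤ z := by
        have : ((⌊x⌋ + ⌊y⌋ : ℤ) : ℝ) ≤ z := by push_cast; linarith
        exact_mod_cast this
      have h2 : z < ⌊x⌋ + ⌊y⌋ + 2 := by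
        have : (z : ℝ) < ((⌊x⌋ + ⌊y⌋ + 2 : ℤ) : ℝ) := by push_cast; linarith
        exact_mod_cast this
      obtain h | h : z = ⌊x⌋ + ⌊y⌋ ∨ z = ⌊x⌋ + ⌊y⌋ + 1 := by omega
      · left
        rw [h] at hz
        push_cast at hz
        linarith
      · right
        rw [h] at hz
        push_cast at hz
        linarith


/-- For the sawtooth function `g(t) = 2|t - ⌊t⌋ - 1/2|`, a positive integer `m`
and reals `t₁, t₂, φ`:
`g(m·t₁+φ) = g(m·t₂+φ) ↔ m·(t₁-t₂) ∈ ℤ ∨ m·(t₁+t₂)+2φ ∈ ℤ`. -/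
theorem sawtooth_height_eq_iff (g : ℝ → ℝ)
    (hg : ∀ t : ℝ, g t = 2 * |t - (⌊t⌋ : ℝ) - 1 / 2|)
    (m : ℕ) (hm : 0 < m) (t₁ t₂ φ : ℝ) :
    g ((m : ℝ) * t₁ + φ) = g ((m : ℝ) * t₂ + φ) ↔
      (∃ z : ℤ, (m : ℝ) * (t₁ - t₂) = (z : ℝ)) ∨
      (∃ z : ℤ, (m : ℝ) * (t₁ + t₂) + 2 * φ = (z : ℝ)) := by
  rw [hg, hg, mul_right_inj' two_ne_zero, abs_sub_floor_sub_half_eq_iff,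
    show (m : ℝ) * t₁ + φ - (m * t₂ + φ) = m * (t₁ - t₂) by ring,
    show (m : ℝ) * t₁ + φ + (m * t₂ + φ) = m * (t₁ + t₂) + 2 * φ by ring]
end

section
/- Let g : ℝ → ℝ be the sawtooth function g(t) = 2·|t − ⌊t⌋ − 1/2|, let n be an even positive integer, and let u, v be real numbers such that g(u + i/n) ≠ g(v + i/n) for every integer i. Then there exists a unique integer b with 0 ≤ b < n such that g(u + (b+i)/n) > g(v + (b+i)/n) for all i = 0, 1, …, n/2 − 1 and g(u + (b+i)/n) < g(v + (b+i)/n) for all i = n/2, …, n − 1. -/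
/-!
Write `n = 2 m`. For fractional parts `x`, `y` of `a`, `b`, the sign of `g a - g b` is that of
`(x - 1/2)² - (y - 1/2)² = (x - y) (x + y - 1)`, and the signs of the two factors are recorded by the
parities of `⌊a - b⌋` and `⌊a + b⌋`. So, away from ties, `g a > g b` exactly when
`⌊a + b⌋ + ⌊a - b⌋` is odd (`sawtooth_gt_iff_odd`).

For `a = u + j/n`, `b = v + j/n` the difference `a - b` is constant, and `⌊a + b⌋` is the integer
quotient `(K + j) / m` with `K = ⌊m (u + v)⌋` (`floor_add_div_eq`). The sign at `j` is thus the parity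
of `(K + j) / m + c` with `c = ⌊u - v⌋`: it is constant on blocks of `m` consecutive integers and
alternates from block to block. The admissible `b` are those for which `K + b = m q` with `q + c` odd;
these form one residue class modulo `2 m`.
-/

/-- Away from ties, the sign of `g a - g b` is a parity: `⌊a + b⌋` and `⌊a - b⌋` detect on which side
of `1` and `0` the sum and the difference of the fractional parts lie. -/
theorem sawtooth_gt_iff_odd (g : ℝ → ℝ)
    (hg : ∀ t : ℝ, g t = 2 * |t - (⌊t⌋ : ℝ) - 1 / 2|) (a b : ℝ) (hab : g a ≠ g b) :
    g a > g b ↔ Odd (⌊a + b⌋ + ⌊a - b⌋) := by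
  have ha0 := Int.floor_le a
  have ha1 := Int.lt_floor_add_one a
  have hb0 := Int.floor_le b
  have hb1 := Int.lt_floor_add_one b
  rw [hg, hg] at hab ⊢
  have key : 2 * |a - (⌊a⌋ : ℝ) - 1 / 2| > 2 * |b - (⌊b⌋ : ℝ) - 1 / 2| ↔
      0 < ((a - ⌊a⌋) - (b - ⌊b⌋)) * ((a - ⌊a⌋) + (b - ⌊b⌋) - 1) := by
    rw [gt_iff_lt, mul_lt_mul_iff_right₀ (by norm_num : (0 : ℝ) < 2), ← sq_lt_sq, ← sub_pos]
    ring_nf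
  have hne1 : a - ⌊a⌋ ≠ b - ⌊b⌋ := fun e => hab (by rw [e])
  have hne2 : (a - ⌊a⌋) + (b - ⌊b⌋) ≠ 1 := fun e => hab (by
    rw [show a - (⌊a⌋ : ℝ) - 1 / 2 = -(b - (⌊b⌋ : ℝ) - 1 / 2) by linarith, abs_neg])
  rw [key]
  rcases lt_or_gt_of_ne hne1 with h1 | h1 <;> rcases lt_or_gt_of_ne hne2 with h2 | h2
  · have e1 : ⌊a - b⌋ = ⌊a⌋ - ⌊b⌋ - 1 := by
      rw [Int.floor_eq_iff]; push_cast; constructor <;> linarith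
    have e2 : ⌊a + b⌋ = ⌊a⌋ + ⌊b⌋ := by
      rw [Int.floor_eq_iff]; push_cast; constructor <;> linarith
    rw [e1, e2]
    exact iff_of_true (mul_pos_of_neg_of_neg (by linarith) (by linarith)) ⟨⌊a⌋ - 1, by ring⟩
  · have e1 : ⌊a - b⌋ = ⌊a⌋ - ⌊b⌋ - 1 := by
      rw [Int.floor_eq_iff]; push_cast; constructor <;> linarith
    have e2 : ⌊a + b⌋ = ⌊a⌋ + ⌊b⌋ + 1 := by
      rw [Int.floor_eq_iff]; push_cast; constructor <;> linarith
    rw [e1, e2]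
    exact iff_of_false (not_lt.2 (mul_nonpos_of_nonpos_of_nonneg (by linarith) (by linarith)))
      (by rw [Int.odd_iff]; omega)
  · have e1 : ⌊a - b⌋ = ⌊a⌋ - ⌊b⌋ := by
      rw [Int.floor_eq_iff]; push_cast; constructor <;> linarith
    have e2 : ⌊a + b⌋ = ⌊a⌋ + ⌊b⌋ := by
      rw [Int.floor_eq_iff]; push_cast; constructor <;> linarith
    rw [e1, e2]
    exact iff_of_false (not_lt.2 (mul_nonpos_of_nonneg_of_nonpos (by linarith) (by linarith)))
      (by rw [Int.odd_iff]; omega)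
  · have e1 : ⌊a - b⌋ = ⌊a⌋ - ⌊b⌋ := by
      rw [Int.floor_eq_iff]; push_cast; constructor <;> linarith
    have e2 : ⌊a + b⌋ = ⌊a⌋ + ⌊b⌋ + 1 := by
      rw [Int.floor_eq_iff]; push_cast; constructor <;> linarith
    rw [e1, e2]
    exact iff_of_true (mul_pos (by linarith) (by linarith)) ⟨⌊a⌋, by ring⟩

theorem floor_add_div_eq (m : ℕ) (hm : 0 < m) (x : ℝ) (j : ℤ) :
    ⌊x + (j : ℝ) / m⌋ = (⌊(m : ℝ) * x⌋ + j) / (m : ℤ) := by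
  have hm' : (m : ℝ) ≠ 0 := by positivity
  rw [← Int.floor_add_intCast, ← Int.floor_div_natCast]
  congr 1
  field_simp

/-- The combinatorial core: `b` starts a block of `m` odd values of `(K + j) / m + c` followed by `m`
even ones exactly when `K + b` is a multiple of `m` with quotient of parity opposite to `c`. -/
theorem block_start_iff (m : ℕ) (hm : 0 < m) (K c b : ℤ) :
    ((∀ i : ℕ, i < m → Odd ((K + (b + i)) / (m : ℤ) + c)) ∧
      (∀ i : ℕ, m ≤ i → i < 2 * m → ¬ Odd ((K + (b + i)) / (m : ℤ) + c))) ↔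
    ∃ q : ℤ, K + b = m * q ∧ Odd (q + c) := by
  have hm' : (0 : ℤ) < m := by exact_mod_cast hm
  have hquot : ∀ q r : ℤ, 0 ≤ r → r < m → (m * q + r) / (m : ℤ) = q := fun q r h0 h1 => by
    rw [Int.add_comm, Int.add_mul_ediv_left _ _ hm'.ne', Int.ediv_eq_zero_of_lt h0 h1, zero_add]
  constructor
  · rintro ⟨h1, h2⟩
    have hb := Int.mul_ediv_add_emod (K + b) m
    have hr0 := Int.emod_nonneg (K + b) hm'.ne'
    have hr1 := Int.emod_lt_of_pos (K + b) hm'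
    set q := (K + b) / (m : ℤ)
    set r := (K + b) % (m : ℤ)
    have hq : Odd (q + c) := by simpa [q] using h1 0 hm
    refine ⟨q, ?_, hq⟩
    -- If `r ≠ 0`, the last term `i = 2 m - 1` has quotient `q + 2`, of the same parity as `q`.
    by_contra hne
    have hr : 1 ≤ r := by
      by_contra hlt
      exact hne (by linarith [show r = 0 by omega])
    have h3 := h2 (2 * m - 1) (by omega) (by omega)
    rw [show K + (b + ((2 * m - 1 : ℕ) : ℤ)) = m * (q + 2) + (r - 1) by
      rw [Nat.cast_sub (by omega)]; push_cast; linarith,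
      hquot _ _ (by omega) (by omega)] at h3
    rw [Int.odd_iff] at h3 hq
    omega
  · rintro ⟨q, hq, hodd⟩
    rw [Int.odd_iff] at hodd
    refine ⟨fun i hi => ?_, fun i hi hi' => ?_⟩
    · rw [← add_assoc, hq, hquot _ _ (by omega) (by omega), Int.odd_iff]
      exact hodd
    · rw [show K + (b + (i : ℤ)) = m * (q + 1) + (i - m) by linarith,
        hquot _ _ (by omega) (by omega), Int.odd_iff]
      omega

/-- The block starts form a single residue class modulo `2 m`. -/
theorem existsUnique_block_start (m : ℕ) (hm : 0 < m) (K c : ℤ) :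
    ∃! b : ℤ, (0 ≤ b ∧ b < 2 * (m : ℤ)) ∧ ∃ q : ℤ, K + b = m * q ∧ Odd (q + c) := by
  have hm' : (0 : ℤ) < 2 * m := by exact_mod_cast Nat.mul_pos two_pos hm
  refine ⟨(m * (c + 1) - K) % (2 * m), ⟨⟨Int.emod_nonneg _ hm'.ne', Int.emod_lt_of_pos _ hm'⟩,
    c + 1 - 2 * ((m * (c + 1) - K) / (2 * m)), ?_, ?_⟩, ?_⟩
  · linarith [Int.mul_ediv_add_emod (m * (c + 1) - K) (2 * m)]
  · rw [Int.odd_iff]; omega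
  · rintro b ⟨⟨h0, h1⟩, q, hq, hodd⟩
    obtain ⟨k, hk⟩ := hodd
    rw [show m * (c + 1) - K = b + 2 * m * (c - k) by
      linear_combination -hq - (m : ℤ) * hk, Int.add_mul_emod_self_left, Int.emod_eq_of_lt h0 h1]


/-- Crossing-sign blocks for even `n`: if `g` is the sawtooth function, `n` an
even positive integer, and `g(u + i/n) ≠ g(v + i/n)` for every integer `i`, then
there is a unique integer `b` with `0 ≤ b < n` such that
`g(u + (b+i)/n) > g(v + (b+i)/n)` for `i = 0, …, n/2 - 1` and
`g(u + (b+i)/n) < g(v + (b+i)/n)` for `i = n/2, …, n - 1`. -/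
theorem sawtooth_sign_blocks_even (g : ℝ → ℝ)
    (hg : ∀ t : ℝ, g t = 2 * |t - (⌊t⌋ : ℝ) - 1 / 2|)
    (n : ℕ) (hn : 0 < n) (hneven : Even n) (u v : ℝ)
    (h : ∀ i : ℤ, g (u + (i : ℝ) / n) ≠ g (v + (i : ℝ) / n)) :
    ∃! b : ℤ, (0 ≤ b ∧ b < (n : ℤ)) ∧
      (∀ i : ℕ, i < n / 2 → g (u + ((b : ℝ) + i) / n) > g (v + ((b : ℝ) + i) / n)) ∧
      (∀ i : ℕ, n / 2 ≤ i → i < n → g (u + ((b : ℝ) + i) / n) < g (v + ((b : ℝ) + i) / n)) := by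
  obtain ⟨m, rfl⟩ := even_iff_exists_two_mul.1 hneven
  have hm : 0 < m := by omega
  have hm' : (m : ℝ) ≠ 0 := by positivity
  have hdiv : 2 * m / 2 = m := by omega
  have sign : ∀ j : ℤ, g (u + (j : ℝ) / (2 * m : ℕ)) > g (v + (j : ℝ) / (2 * m : ℕ)) ↔
      Odd ((⌊(m : ℝ) * (u + v)⌋ + j) / (m : ℤ) + ⌊u - v⌋) := fun j => by
    have hsum : u + (j : ℝ) / (2 * m : ℕ) + (v + (j : ℝ) / (2 * m : ℕ)) = u + v + (j : ℝ) / m := by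
      push_cast
      field_simp
      ring
    rw [sawtooth_gt_iff_odd g hg _ _ (h j), ← floor_add_div_eq m hm, add_sub_add_right_eq_sub, hsum]
  have sign_neg : ∀ j : ℤ, g (u + (j : ℝ) / (2 * m : ℕ)) < g (v + (j : ℝ) / (2 * m : ℕ)) ↔
      ¬ Odd ((⌊(m : ℝ) * (u + v)⌋ + j) / (m : ℤ) + ⌊u - v⌋) := fun j => by
    rw [← sign, gt_iff_lt, not_lt]
    exact ⟨le_of_lt, fun hle => lt_of_le_of_ne hle (h j)⟩
  have cast_eq : ∀ (b : ℤ) (i : ℕ), (b : ℝ) + i = ((b + i : ℤ) : ℝ) := fun b i => by push_cast; rfl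
  simp only [hdiv, cast_eq, sign, sign_neg, block_start_iff m hm]
  simpa using existsUnique_block_start m hm ⌊(m : ℝ) * (u + v)⌋ ⌊u - v⌋
end

section
/- Let g : ℝ → ℝ be the sawtooth function g(t) = 2·|t − ⌊t⌋ − 1/2|, let n be an odd integer with n ≥ 3, and let u, v be real numbers such that g(u + i/n) ≠ g(v + i/n) for every integer i. Then there exist an integer b with 0 ≤ b < n and a sign ε ∈ {+1, −1} such that the sign of g(u + (b+i)/n) − g(v + (b+i)/n) equals ε for all i = 0, 1, …, (n−1)/2 and equals −ε for all i = (n+1)/2, …, n − 1. -/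
/-!
The difference `g x - g y` has the sign of `(X - Y) (X + Y - 1)`, where `X` and `Y` are the
fractional parts of `x` and `y`. These two factors differ from `x - y` and `x + y` by integers. It
follows that `g x = g y` as soon as `x - y` or `x + y` is an integer (`sawtooth_eq`), and that
otherwise the sign depends only on the parity of `⌊x + y⌋ + ⌊x - y⌋` (`sawtooth_lt`, `sawtooth_gt`).

For `x = u + j / n`, `y = v + j / n` the difference `x - y` is constant, and the sum is `s + 2 j / n`
with `s = u + v`. Write `n = 2 k + 1` and `p = ⌊n s⌋`. For `j = k p` the sum exceeds the integer `p`
by `δ = s - p / n`, which lies in `(0, 1 / n)` since the value `δ = 0` is excluded by hypothesis.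
Then `δ + 2 i / n` lies in `(0, 1)` for `0 ≤ i ≤ k` and in `(1, 2)` for `k < i < n`, which yields the
two blocks. Finally `k p` may be reduced modulo `n`, as this changes the sum by an even integer.
-/

theorem sawtooth_eq (x y : ℝ) (m : ℤ) (hm : x - y = m ∨ x + y = m) :
    2 * |x - (⌊x⌋ : ℝ) - 1 / 2| = 2 * |y - (⌊y⌋ : ℝ) - 1 / 2| := by
  have hx0 := Int.floor_le x
  have hx1 := Int.lt_floor_add_one x
  have hy0 := Int.floor_le y
  have hy1 := Int.lt_floor_add_one y
  generalize ⌊x⌋ = a at *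
  generalize ⌊y⌋ = b at *
  rcases hm with hm | hm
  · have h1 : a - b < m + 1 := by
      have : (a : ℝ) - b < m + 1 := by linarith
      exact_mod_cast this
    have h2 : m < a - b + 1 := by
      have : (m : ℝ) < a - b + 1 := by linarith
      exact_mod_cast this
    have h3 : m = a - b := by omega
    subst h3
    push_cast at hm
    congr 2
    linarith
  · have h1 : a + b < m + 1 := by
      have : (a : ℝ) + b < m + 1 := by linarith
      exact_mod_cast this
    have h2 : m < a + b + 2 := by
      have : (m : ℝ) < a + b + 2 := by linarith
      exact_mod_cast this
    obtain h3 | h3 : m = a + b ∨ m = a + b + 1 := by omega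
    · subst h3
      -- Both fractional parts vanish.
      push_cast at hm
      congr 2
      linarith
    · subst h3
      push_cast at hm
      rw [← abs_neg]
      congr 2
      linarith

theorem sawtooth_lt (x y : ℝ) (m r : ℤ) (hm0 : (m : ℝ) < x + y) (hm1 : x + y < m + 1)
    (hr0 : (r : ℝ) < x - y) (hr1 : x - y < r + 1) (hpar : Even (m + r)) :
    2 * |x - (⌊x⌋ : ℝ) - 1 / 2| < 2 * |y - (⌊y⌋ : ℝ) - 1 / 2| := by
  have hx0 := Int.floor_le x
  have hx1 := Int.lt_floor_add_one x
  have hy0 := Int.floor_le y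
  have hy1 := Int.lt_floor_add_one y
  generalize ⌊x⌋ = a at *
  generalize ⌊y⌋ = b at *
  have h1 : a - b < r + 2 := by
    have : (a : ℝ) - b < r + 2 := by linarith
    exact_mod_cast this
  have h2 : r < a - b + 1 := by
    have : (r : ℝ) < a - b + 1 := by linarith
    exact_mod_cast this
  have h3 : a + b < m + 1 := by
    have : (a : ℝ) + b < m + 1 := by linarith
    exact_mod_cast this
  have h4 : m < a + b + 2 := by
    have : (m : ℝ) < a + b + 2 := by linarith
    exact_mod_cast this
  obtain ⟨c, hc⟩ := hpar
  have hlt : |x - (a : ℝ) - 1 / 2| < |y - (b : ℝ) - 1 / 2| := by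
    rw [← sq_lt_sq]
    obtain ⟨h5, h6⟩ | ⟨h5, h6⟩ : (r = a - b ∧ m = a + b) ∨ (r = a - b - 1 ∧ m = a + b + 1) := by
      omega
    · subst h5 h6
      push_cast at *
      nlinarith
    · subst h5 h6
      push_cast at *
      nlinarith
  linarith

/-- The odd case is the even case with `x` and `y` exchanged: this replaces `⌊x - y⌋ = r` by
`⌊y - x⌋ = -r - 1` and so flips the parity. -/
theorem sawtooth_gt (x y : ℝ) (m r : ℤ) (hm0 : (m : ℝ) < x + y) (hm1 : x + y < m + 1)
    (hr0 : (r : ℝ) < x - y) (hr1 : x - y < r + 1) (hpar : ¬ Even (m + r)) :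
    2 * |y - (⌊y⌋ : ℝ) - 1 / 2| < 2 * |x - (⌊x⌋ : ℝ) - 1 / 2| := by
  refine sawtooth_lt y x m (-r - 1) (by linarith) (by linarith) ?_ ?_ ?_
  · push_cast; linarith
  · push_cast; linarith
  · grind

/-- Crossing-sign blocks for odd `n ≥ 3`: if `g` is the sawtooth function and
`g(u + i/n) ≠ g(v + i/n)` for every integer `i`, then there are an integer `b`
with `0 ≤ b < n` and a sign `ε ∈ {+1, -1}` such that the sign of
`g(u + (b+i)/n) - g(v + (b+i)/n)` equals `ε` for `i = 0, …, (n-1)/2` and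
equals `-ε` for `i = (n+1)/2, …, n - 1`. -/
theorem sawtooth_sign_blocks_odd (g : ℝ → ℝ)
    (hg : ∀ t : ℝ, g t = 2 * |t - (⌊t⌋ : ℝ) - 1 / 2|)
    (n : ℕ) (hn : 3 ≤ n) (hnodd : Odd n) (u v : ℝ)
    (h : ∀ i : ℤ, g (u + (i : ℝ) / n) ≠ g (v + (i : ℝ) / n)) :
    ∃ (b : ℤ) (ε : ℝ), (0 ≤ b ∧ b < (n : ℤ)) ∧ (ε = 1 ∨ ε = -1) ∧
      (∀ i : ℕ, i ≤ (n - 1) / 2 →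
        Real.sign (g (u + ((b : ℝ) + i) / n) - g (v + ((b : ℝ) + i) / n)) = ε) ∧
      (∀ i : ℕ, (n + 1) / 2 ≤ i → i < n →
        Real.sign (g (u + ((b : ℝ) + i) / n) - g (v + ((b : ℝ) + i) / n)) = -ε) := by
  obtain ⟨k, hk⟩ := hnodd
  have hn0 : (0 : ℝ) < n := by exact_mod_cast (by omega : 0 < n)
  have hkR : (n : ℝ) = 2 * k + 1 := by exact_mod_cast hk
  have hne (i m : ℤ) (hm : u - v = m ∨ u + v + 2 * i / n = m) : False := by
    apply h i
    rw [hg, hg]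
    apply sawtooth_eq _ _ m
    rcases hm with hm | hm
    · left; rw [← hm]; ring
    · right; rw [← hm]; ring
  obtain ⟨r, hr⟩ : ∃ r, r = ⌊u - v⌋ := ⟨_, rfl⟩
  have hr0 : (r : ℝ) < u - v :=
    lt_of_le_of_ne (hr ▸ Int.floor_le _) fun e => hne 0 r (Or.inl e.symm)
  have hr1 : u - v < r + 1 := hr ▸ Int.lt_floor_add_one _
  obtain ⟨p, hp⟩ : ∃ p, p = ⌊(n : ℝ) * (u + v)⌋ := ⟨_, rfl⟩
  have hp0 : (p : ℝ) < n * (u + v) := by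
    refine lt_of_le_of_ne (hp ▸ Int.floor_le _) fun e => hne (k * p) p (Or.inr ?_)
    push_cast
    field_simp
    have : (p : ℝ) * n = p * (2 * k + 1) := by rw [hkR]
    linarith
  have hp1 : (n : ℝ) * (u + v) < p + 1 := hp ▸ Int.lt_floor_add_one _
  have hnZ : (0 : ℤ) < n := by omega
  obtain ⟨b, hb⟩ : ∃ b, b = (k * p) % (n : ℤ) := ⟨_, rfl⟩
  obtain ⟨q, hq⟩ : ∃ q, q = (k * p) / (n : ℤ) := ⟨_, rfl⟩
  have hbq : b + n * q = k * p := by rw [hb, hq]; exact Int.emod_add_mul_ediv _ _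
  have hbqR : (b : ℝ) + n * q = k * p := by exact_mod_cast hbq
  obtain ⟨m, hm⟩ : ∃ m : ℤ, m = p - 2 * q := ⟨_, rfl⟩
  have hmR : (m : ℝ) = p - 2 * q := by exact_mod_cast hm
  have hsum (i : ℕ) : (u + ((b : ℝ) + i) / n) + (v + ((b : ℝ) + i) / n)
      = m + (n * (u + v) - p + 2 * i) / n := by
    rw [hmR]
    field_simp
    have : (p : ℝ) * n = p * (2 * k + 1) := by rw [hkR]
    linarith
  have hdiff (i : ℕ) : (u + ((b : ℝ) + i) / n) - (v + ((b : ℝ) + i) / n) = u - v := by ring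
  have hA (i : ℕ) (hi : i ≤ k) : 0 < ((n : ℝ) * (u + v) - p + 2 * i) / n ∧
      ((n : ℝ) * (u + v) - p + 2 * i) / n < 1 := by
    have : (i : ℝ) ≤ k := by exact_mod_cast hi
    have : (0 : ℝ) ≤ i := by positivity
    constructor
    · apply div_pos _ hn0; linarith
    · rw [div_lt_one hn0]; linarith
  have hB (i : ℕ) (hi : k + 1 ≤ i) (hi' : i ≤ 2 * k) :
      1 < ((n : ℝ) * (u + v) - p + 2 * i) / n ∧
      ((n : ℝ) * (u + v) - p + 2 * i) / n < 2 := by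
    have : (k : ℝ) + 1 ≤ i := by exact_mod_cast hi
    have : (i : ℝ) ≤ 2 * k := by exact_mod_cast hi'
    constructor
    · rw [one_lt_div hn0]; linarith
    · rw [div_lt_iff₀ hn0]; linarith
  have hb0 : 0 ≤ b ∧ b < (n : ℤ) :=
    ⟨hb ▸ Int.emod_nonneg _ hnZ.ne', hb ▸ Int.emod_lt_of_pos _ hnZ⟩
  by_cases hpar : Even (m + r)
  · have hpar' : ¬ Even (m + 1 + r) := by grind
    refine ⟨b, -1, hb0, Or.inr rfl, fun i hi => ?_, fun i hi hi' => ?_⟩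
    · obtain ⟨h1, h2⟩ := hA i (by omega)
      rw [hg, hg]
      apply Real.sign_of_neg
      rw [sub_neg]
      apply sawtooth_lt _ _ m r _ _ _ _ hpar <;> simp only [hsum, hdiff] <;> linarith
    · obtain ⟨h1, h2⟩ := hB i (by omega) (by omega)
      rw [hg, hg, neg_neg]
      apply Real.sign_of_pos
      rw [sub_pos]
      apply sawtooth_gt _ _ (m + 1) r _ _ _ _ hpar' <;> simp only [hsum, hdiff] <;>
        push_cast <;> linarith
  · have hpar' : Even (m + 1 + r) := by grind
    refine ⟨b, 1, hb0, Or.inl rfl, fun i hi => ?_, fun i hi hi' => ?_⟩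
    · obtain ⟨h1, h2⟩ := hA i (by omega)
      rw [hg, hg]
      apply Real.sign_of_pos
      rw [sub_pos]
      apply sawtooth_gt _ _ m r _ _ _ _ hpar <;> simp only [hsum, hdiff] <;> linarith
    · obtain ⟨h1, h2⟩ := hB i (by omega) (by omega)
      rw [hg, hg]
      apply Real.sign_of_neg
      rw [sub_neg]
      apply sawtooth_lt _ _ (m + 1) r _ _ _ _ hpar' <;> simp only [hsum, hdiff] <;>
        push_cast <;> linarith
end

section
/- Let s, n be coprime positive integers with n ≥ 2s+1, let m be a positive integer and φ a real number. Let f₁₂ : ℝ → ℂ be the piecewise-linear map with f₁₂(k/n) = e^{2πisk/n} for every integer k and f₁₂ affine on each interval [k/n, (k+1)/n], and let f₃ : ℝ → ℝ be f₃(t) = g(m·t + φ) where g(t) = 2·|t − ⌊t⌋ − 1/2|. Suppose d is a positive integer dividing both n and m, and k is an integer with k·s ≡ 1 (mod n). Then for every real t, f₁₂(t + k/d) = e^{2πi/d} · f₁₂(t) and f₃(t + k/d) = f₃(t). -/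
/-!
Write `n = d * e`, so the shift by `k / d` in the parameter is a shift by `k * e` in the vertex
index. On vertices this multiplies by `exp (2πi s k e / n) = exp (2πi s k / d)`, which equals
`exp (2πi / d)` because `k * s ≡ 1` modulo `n`, hence modulo `d`. As `f₁₂` interpolates its vertices
affinely and rotation is linear, the identity extends to every real parameter. The height is
unchanged because `m * (k / d)` is an integer and `g` has period `1`.
-/

/-- If `d = gcd`-type common divisor of `n` and `m` and `k·s ≡ 1 (mod n)`, then
the billiard curve `Z(s,n,m,φ)` in the cylinder is invariant under the rotation
by `2π/d` about the central axis: `f₁₂(t + k/d) = e^{2πi/d}·f₁₂(t)` and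
`f₃(t + k/d) = f₃(t)`. -/
theorem cylinder_curve_cyclic_period (s n m : ℕ) (φ : ℝ)
    (hs : 0 < s) (hn : 0 < n) (hm : 0 < m)
    (hcop : Nat.gcd s n = 1) (hns : n ≥ 2 * s + 1)
    (g : ℝ → ℝ) (hg : ∀ t : ℝ, g t = 2 * |t - (⌊t⌋ : ℝ) - 1 / 2|)
    (f₁₂ : ℝ → ℂ)
    (hvert : ∀ k : ℤ, f₁₂ ((k : ℝ) / n) =
      Complex.exp (2 * Real.pi * Complex.I * (s : ℂ) * (k : ℂ) / (n : ℂ)))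
    (haff : ∀ k : ℤ, ∀ a : ℝ, a ∈ Set.Icc (0 : ℝ) 1 →
      f₁₂ (((k : ℝ) + a) / n) =
        (1 - (a : ℂ)) * f₁₂ ((k : ℝ) / n) + (a : ℂ) * f₁₂ (((k : ℝ) + 1) / n))
    (f₃ : ℝ → ℝ) (hf₃ : ∀ t : ℝ, f₃ t = g ((m : ℝ) * t + φ))
    (d : ℕ) (hd : 0 < d) (hdn : d ∣ n) (hdm : d ∣ m)
    (k : ℤ) (hk : k * (s : ℤ) ≡ 1 [ZMOD (n : ℤ)]) :
    ∀ t : ℝ, f₁₂ (t + (k : ℝ) / d) = Complex.exp (2 * Real.pi * Complex.I / (d : ℂ)) * f₁₂ t ∧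
      f₃ (t + (k : ℝ) / d) = f₃ t := by
  have hn0 : (n : ℝ) ≠ 0 := by exact_mod_cast hn.ne'
  have hnC : (n : ℂ) ≠ 0 := by exact_mod_cast hn.ne'
  have hd0 : (d : ℝ) ≠ 0 := by exact_mod_cast hd.ne'
  have hdC : (d : ℂ) ≠ 0 := by exact_mod_cast hd.ne'
  obtain ⟨e, he⟩ := hdn
  obtain ⟨c, hc⟩ := hdm
  obtain ⟨q, hq⟩ := hk.symm.dvd
  have heR : (n : ℝ) = d * e := by exact_mod_cast he
  have heC : (n : ℂ) = d * e := by exact_mod_cast he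
  have hqC : (s : ℂ) * k = 1 + d * e * q := by
    have : (k : ℂ) * s - 1 = n * q := by exact_mod_cast hq
    rw [heC] at this
    linear_combination this
  have hshift : (k : ℝ) / d = (k * e : ℝ) / n := by
    have he0 : (e : ℝ) ≠ 0 := fun h => hn0 (by rw [heR, h, mul_zero])
    rw [heR]
    field_simp
  have hvertex : ∀ j : ℤ, f₁₂ (((j + k * e : ℤ) : ℝ) / n) =
      Complex.exp (2 * Real.pi * Complex.I / (d : ℂ)) * f₁₂ ((j : ℝ) / n) := by
    intro j
    rw [hvert, hvert, ← Complex.exp_add, Complex.exp_eq_exp_iff_exists_int]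
    refine ⟨e * q, ?_⟩
    have he0 : (e : ℂ) ≠ 0 := fun h => hnC (by rw [heC, h, mul_zero])
    push_cast
    rw [heC]
    field_simp
    linear_combination (e : ℂ) * hqC
  intro t
  constructor
  · -- `t` lies on the edge with index `⌊n * t⌋`, at affine coordinate `Int.fract (n * t)`.
    have ha : Int.fract ((n : ℝ) * t) ∈ Set.Icc (0 : ℝ) 1 :=
      ⟨Int.fract_nonneg _, (Int.fract_lt_one _).le⟩
    generalize hj : ⌊(n : ℝ) * t⌋ = j
    generalize hfr : Int.fract ((n : ℝ) * t) = a at ha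
    have hsum : (j : ℝ) + a = n * t := by
      rw [← hj, ← hfr]
      exact Int.floor_add_fract _
    have ht : t = ((j : ℝ) + a) / n := by
      rw [hsum]
      field_simp
    have ht' : t + (k : ℝ) / d = (((j + k * e : ℤ) : ℝ) + a) / n := by
      rw [hshift, ht]
      push_cast
      ring
    have h1 := hvertex (j + 1)
    have hcast : ((j + 1 + k * e : ℤ) : ℝ) = ((j + k * e : ℤ) : ℝ) + 1 := by
      push_cast
      ring
    rw [hcast, Int.cast_add j 1, Int.cast_one] at h1
    rw [ht', haff _ a ha, hvertex j, h1, ht, haff j a ha]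
    ring
  · have harg : (m : ℝ) * (t + k / d) + φ = (m * t + φ) + ((k * c : ℤ) : ℝ) := by
      have hcR : (m : ℝ) = d * c := by exact_mod_cast hc
      push_cast
      rw [hcR]
      field_simp
      ring
    rw [hf₃, hf₃, harg, hg, hg, Int.floor_add_intCast]
    push_cast
    ring_nf
end

section
/- Let s, n be coprime positive integers with n ≥ 2s+1 and n even, let m be an odd positive integer and φ a real number. Let f₁₂ : ℝ → ℂ be the piecewise-linear map with f₁₂(k/n) = e^{2πisk/n} for every integer k and f₁₂ affine on each interval [k/n, (k+1)/n], and let f₃ : ℝ → ℝ be f₃(t) = g(m·t + φ) where g(t) = 2·|t − ⌊t⌋ − 1/2|. Let k be an integer with k·s ≡ 1 (mod n). Then for every real t, f₁₂(t + k/2) = −f₁₂(t) and f₃(t + k/2) = 1 − f₃(t). -/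
/-!
Since `n` is even, `k * s ≡ 1 (mod n)` forces `k` and `s` to be odd. With `n = 2p`, the shift by
`k / 2` is the shift by `k * p` edges, which multiplies each vertex by `exp (π i s k) = -1`; as the
curve is affine on edges, this gives `f₁₂ (t + k / 2) = -f₁₂ t`. On the height side, `m * k / 2` is a
half-integer, and the sawtooth `g` satisfies `g (x + r + 1 / 2) = 1 - g x` for every integer `r`.
-/

theorem sawtooth_add_half (x : ℝ) (r : ℤ) :
    2 * |x + (r + 1 / 2) - (⌊x + (r + 1 / 2)⌋ : ℝ) - 1 / 2|
      = 1 - 2 * |x - (⌊x⌋ : ℝ) - 1 / 2| := by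
  have h0 := Int.floor_le x
  have h1 := Int.lt_floor_add_one x
  rcases lt_or_ge (x - ⌊x⌋) (1 / 2) with h | h
  · have hf : ⌊x + (r + 1 / 2)⌋ = ⌊x⌋ + r := by
      rw [Int.floor_eq_iff]; push_cast; constructor <;> linarith
    rw [hf, abs_of_nonneg (by push_cast; linarith), abs_of_nonpos (by linarith)]
    push_cast; ring
  · have hf : ⌊x + (r + 1 / 2)⌋ = ⌊x⌋ + r + 1 := by
      rw [Int.floor_eq_iff]; push_cast; constructor <;> linarith
    rw [hf, abs_of_nonpos (by push_cast; linarith), abs_of_nonneg (by linarith)]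
    push_cast; ring

/-- Shifting the vertex index by `k * p`, half of `k` times the period `n = 2p`, gives the antipodal
vertex, because `s * k` is odd. -/
theorem exp_vertex_antipodal (s p : ℂ) (hp : p ≠ 0) (j k q : ℤ) (hq : s * k = 2 * q + 1) :
    Complex.exp (2 * Real.pi * Complex.I * s * ((j : ℂ) + k * p) / (p + p))
      = -Complex.exp (2 * Real.pi * Complex.I * s * (j : ℂ) / (p + p)) := by
  have h : 2 * Real.pi * Complex.I * s * ((j : ℂ) + k * p) / (p + p)
      = 2 * Real.pi * Complex.I * s * (j : ℂ) / (p + p)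
        + (Real.pi * Complex.I + q * (2 * Real.pi * Complex.I)) := by
    have h2 : p + p ≠ 0 := by rw [← two_mul]; exact mul_ne_zero two_ne_zero hp
    field_simp
    linear_combination (2 * p) * hq
  rw [h, Complex.exp_add, Complex.exp_add, Complex.exp_int_mul_two_pi_mul_I, Complex.exp_pi_mul_I]
  ring


/-- If `n` is even and `m` is odd, the billiard curve `Z(s,n,m,φ)` is invariant
under the point reflection through the center of the cylinder:
`f₁₂(t + k/2) = -f₁₂(t)` and `f₃(t + k/2) = 1 - f₃(t)`, where `k·s ≡ 1 (mod n)`. -/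
theorem cylinder_curve_strongly_amphicheiral (s n m : ℕ) (φ : ℝ)
    (hs : 0 < s) (hn : 0 < n) (hm : 0 < m)
    (hcop : Nat.gcd s n = 1) (hns : n ≥ 2 * s + 1)
    (hneven : Even n) (hmodd : Odd m)
    (g : ℝ → ℝ) (hg : ∀ t : ℝ, g t = 2 * |t - (⌊t⌋ : ℝ) - 1 / 2|)
    (f₁₂ : ℝ → ℂ)
    (hvert : ∀ k : ℤ, f₁₂ ((k : ℝ) / n) =
      Complex.exp (2 * Real.pi * Complex.I * (s : ℂ) * (k : ℂ) / (n : ℂ)))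
    (haff : ∀ k : ℤ, ∀ a : ℝ, a ∈ Set.Icc (0 : ℝ) 1 →
      f₁₂ (((k : ℝ) + a) / n) =
        (1 - (a : ℂ)) * f₁₂ ((k : ℝ) / n) + (a : ℂ) * f₁₂ (((k : ℝ) + 1) / n))
    (f₃ : ℝ → ℝ) (hf₃ : ∀ t : ℝ, f₃ t = g ((m : ℝ) * t + φ))
    (k : ℤ) (hk : k * (s : ℤ) ≡ 1 [ZMOD (n : ℤ)]) :
    ∀ t : ℝ, f₁₂ (t + (k : ℝ) / 2) = -f₁₂ t ∧ f₃ (t + (k : ℝ) / 2) = 1 - f₃ t := by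
  intro t
  obtain ⟨p, rfl⟩ := hneven
  obtain ⟨c, hc⟩ := hk.dvd
  have hks : k * (s : ℤ) = 2 * (-(p * c)) + 1 := by push_cast at hc; linarith
  have hkodd : Odd k := (Int.odd_mul.mp ⟨_, hks⟩).1
  have hp : 0 < p := by omega
  have hpR : (p : ℝ) ≠ 0 := by positivity
  have hpC : (p : ℂ) ≠ 0 := by exact_mod_cast hp.ne'
  constructor
  · have hsk : (s : ℂ) * k = 2 * ((-(p * c) : ℤ) : ℂ) + 1 := by
      rw [mul_comm]; exact_mod_cast hks
    have hanti : ∀ j : ℤ, f₁₂ (((j + k * p : ℤ) : ℝ) / (p + p : ℕ))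
        = -f₁₂ ((j : ℝ) / (p + p : ℕ)) := by
      intro j
      rw [hvert, hvert]
      have := exp_vertex_antipodal s p hpC j k _ hsk
      push_cast at this ⊢
      exact this
    set j : ℤ := ⌊((p + p : ℕ) : ℝ) * t⌋ with hj
    set a : ℝ := Int.fract (((p + p : ℕ) : ℝ) * t) with ha
    have haI : a ∈ Set.Icc (0 : ℝ) 1 := ⟨Int.fract_nonneg _, (Int.fract_lt_one _).le⟩
    have hja : (j : ℝ) + a = ((p + p : ℕ) : ℝ) * t := Int.floor_add_fract _
    have hN : ((p + p : ℕ) : ℝ) ≠ 0 := by positivity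
    have ht : t = ((j : ℝ) + a) / (p + p : ℕ) := by rw [hja]; field_simp
    have ht' : t + (k : ℝ) / 2 = (((j + k * p : ℤ) : ℝ) + a) / (p + p : ℕ) := by
      rw [eq_div_iff hN]; push_cast at hja ⊢; linarith
    have h1 := hanti (j + 1)
    have e : (((j + 1 + k * p : ℤ)) : ℝ) = ((j + k * p : ℤ) : ℝ) + 1 := by push_cast; ring
    have e' : (((j + 1 : ℤ)) : ℝ) = (j : ℝ) + 1 := by push_cast; ring
    rw [e, e'] at h1
    have hL := haff (j + k * p) a haI
    have hR := haff j a haI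
    rw [← ht', hanti j, h1] at hL
    rw [← ht] at hR
    rw [hL, hR]; ring
  · obtain ⟨r, hr⟩ := (show Odd ((m : ℤ)) by exact_mod_cast hmodd).mul hkodd
    have hr' : (m : ℝ) * k = 2 * r + 1 := by exact_mod_cast hr
    have e : (m : ℝ) * (t + k / 2) + φ = (m * t + φ) + (r + 1 / 2) := by linarith
    rw [hf₃, hf₃, hg, hg, e]
    exact sawtooth_add_half _ r
end
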